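/- Let χ ≥ 0, 0 ≤ ξ < (χ+1)/2 and σ > 0. There exist constants 0 < c ≤ C and λ₀ > 0 such that: for every eigenpair (λ, φ) of the Laplace kernel with respect to p with 0 < λ < λ₀, with φ odd (φ(−x) = −φ(x)) and normalized so that ∫_ℝ p(x) φ(x)² dx = 1, the coefficient c_φ = ∫_ℝ p(x) f*_ξ(x) φ(x) dx satisfies c · λ^{(3χ/4 + 1 − ξ)/(χ+2)} ≤ |c_φ| ≤ C · λ^{(3χ/4 + 1 − ξ)/(χ+2)}. -/

import Mathlib

open MeasureTheory Real

/-- The data density `p(x) = |x|^χ e^{-x²} / Γ((1+χ)/2)`. -/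
noncomputable def dataDensity (χ : ℝ) (x : ℝ) : ℝ :=
  |x| ^ χ * Real.exp (-x ^ 2) / Real.Gamma ((1 + χ) / 2)

/-- The target function `f*_ξ(x) = sign(x) |x|^{-ξ}`. -/
noncomputable def targetFun (ξ : ℝ) (x : ℝ) : ℝ :=
  Real.sign x * |x| ^ (-ξ)

theorem le_of_hasDeriv_nonneg {f f' : ℝ → ℝ} {a b : ℝ} (hab : a ≤ b)
    (h : ∀ x ∈ Set.Icc a b, HasDerivAt f (f' x) x) (h0 : ∀ x ∈ Set.Icc a b, 0 ≤ f' x) :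
    f a ≤ f b := by
  have hm : MonotoneOn f (Set.Icc a b) := by
    refine monotoneOn_of_deriv_nonneg (convex_Icc a b)
      (fun x hx => (h x hx).continuousAt.continuousWithinAt) ?_ ?_
    · intro x hx
      rw [interior_Icc] at hx
      exact (h x (Set.Ioo_subset_Icc_self hx)).differentiableAt.differentiableWithinAt
    · intro x hx
      rw [interior_Icc] at hx
      rw [(h x (Set.Ioo_subset_Icc_self hx)).deriv]
      exact h0 x (Set.Ioo_subset_Icc_self hx)
  exact hm (Set.left_mem_Icc.2 hab) (Set.right_mem_Icc.2 hab) hab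

/-- scaled weight -/
noncomputable def wt (χ ε t : ℝ) : ℝ := t ^ χ * Real.exp (-(ε * t ^ 2))

structure Sol (χ κ ε : ℝ) (u v : ℝ → ℝ) : Prop where
  hu : ∀ t, 0 ≤ t → HasDerivAt u (v t) t
  hv : ∀ t, 0 ≤ t → HasDerivAt v (-(wt χ ε t - κ * ε) * u t) t
  u0 : u 0 = 0
  v0 : v 0 = 1
  bdd : ∃ B, ∀ t, |u t| ≤ B
  lim : Filter.Tendsto u Filter.atTop (nhds 0)

theorem wt_nonneg {χ ε t : ℝ} (ht : 0 ≤ t) : 0 ≤ wt χ ε t := by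
  unfold wt; positivity

theorem wt_pos {χ ε t : ℝ} (ht : 0 < t) : 0 < wt χ ε t := by
  unfold wt; positivity

theorem wt_ge {χ ε t : ℝ} (hχ : 0 ≤ χ) (ht : 1 ≤ t) : 1 - ε * t ^ 2 ≤ wt χ ε t := by
  have h1 : 1 ≤ t ^ χ := Real.one_le_rpow ht hχ
  have h2 := Real.add_one_le_exp (-(ε * t ^ 2))
  have h3 := Real.exp_pos (-(ε * t ^ 2))
  unfold wt
  nlinarith

theorem wt_le_rpow {χ ε t : ℝ} (hε : 0 ≤ ε) (ht : 0 ≤ t) : wt χ ε t ≤ t ^ χ := by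
  have h1 : 0 ≤ t ^ χ := by positivity
  have h2 : Real.exp (-(ε * t ^ 2)) ≤ 1 := by
    rw [Real.exp_le_one_iff]; nlinarith [mul_nonneg hε (sq_nonneg t)]
  unfold wt
  nlinarith

theorem wt_hasDeriv {χ ε t : ℝ} (ht : 0 < t) :
    HasDerivAt (wt χ ε) ((χ / t - 2 * ε * t) * wt χ ε t) t := by
  have h1 : HasDerivAt (fun t : ℝ => t ^ χ) (χ * t ^ (χ - 1)) t :=
    Real.hasDerivAt_rpow_const (Or.inl ht.ne')
  have h2 : HasDerivAt (fun t : ℝ => Real.exp (-(ε * t ^ 2)))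
      (Real.exp (-(ε * t ^ 2)) * (-(ε * (2 * t)))) t := by
    have := ((((hasDerivAt_pow 2 t).const_mul ε).neg).exp)
    simpa using this
  have h3 := h1.mul h2
  have e : (χ / t - 2 * ε * t) * wt χ ε t = χ * t ^ (χ - 1) * Real.exp (-(ε * t ^ 2)) +
      t ^ χ * (Real.exp (-(ε * t ^ 2)) * (-(ε * (2 * t)))) := by
    rw [Real.rpow_sub_one ht.ne']; unfold wt; field_simp; ring
  rw [e]; exact h3

theorem inner_region {χ κ ε : ℝ} {u v : ℝ → ℝ} (hχ : 0 ≤ χ) (hκ : 0 < κ) (hε : 0 < ε)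
    (h1 : κ * ε ≤ 1 / 64) (h2 : ε ≤ 1 / 64) (S : Sol χ κ ε u v) :
    ∃ x1, 1 ≤ x1 ∧ x1 ≤ 4 ∧ v x1 = 0 ∧ (∀ t, 0 ≤ t → t ≤ x1 → 0 ≤ u t ∧ u t ≤ 2 * t) ∧
      2 / 3 ≤ u x1 := by
  have hκε : 0 < κ * ε := mul_pos hκ hε
  have hQ : ∀ t, 1 ≤ t → t ≤ 4 → 1 / 2 ≤ wt χ ε t - κ * ε := by
    intro t ht1 ht4
    have := @wt_ge χ ε t hχ ht1
    nlinarith [mul_le_mul_of_nonneg_left (show t ^ 2 ≤ 16 by nlinarith) hε.le]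
  have hvc : ContinuousOn v (Set.Icc 0 4) := fun t ht => (S.hv t ht.1).continuousAt.continuousWithinAt
  -- existence of a nonpositive point
  have hex : ∃ t ∈ Set.Icc (0 : ℝ) 4, v t ≤ 0 := by
    by_contra hcon
    push Not at hcon
    have hmono : ∀ s t, 0 ≤ s → s ≤ t → t ≤ 4 → u s ≤ u t := by
      intro s t hs hst ht
      exact le_of_hasDeriv_nonneg hst (fun x hx => S.hu x (hs.trans hx.1))
        (fun x hx => (hcon x ⟨hs.trans hx.1, hx.2.trans ht⟩).le)
    have hu0 : ∀ t, 0 ≤ t → t ≤ 4 → 0 ≤ u t := by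
      intro t h0 h4
      have := hmono 0 t le_rfl h0 h4
      rwa [S.u0] at this
    have hvanti : ∀ s t, 1 ≤ s → s ≤ t → t ≤ 4 → v t ≤ v s := by
      intro s t hs hst ht
      have := le_of_hasDeriv_nonneg (f := fun x => -v x) hst
        (fun x hx => (S.hv x (by linarith [hx.1])).neg) (fun x hx => by
          have a1 := hQ x (by linarith [hx.1]) (by linarith [hx.2])
          have a2 := hu0 x (by linarith [hx.1]) (by linarith [hx.2])
          nlinarith)
      simpa using this
    have k1 : u 1 - v 2 * 1 ≤ u 2 - v 2 * 2 := by
      refine le_of_hasDeriv_nonneg (f := fun x => u x - v 2 * x) (f' := fun x => v x - v 2 * 1)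
        (by norm_num) (fun x hx => (S.hu x (by linarith [hx.1])).sub ((hasDerivAt_id x).const_mul _)) ?_
      intro x hx
      have := hvanti x 2 hx.1 hx.2 (by norm_num)
      linarith
    have k2 : -v 2 - 1 / 2 * u 2 * 2 ≤ -v 4 - 1 / 2 * u 2 * 4 := by
      refine le_of_hasDeriv_nonneg (f := fun x => -v x - 1 / 2 * u 2 * x)
        (f' := fun x => -(-(wt χ ε x - κ * ε) * u x) - 1 / 2 * u 2 * 1)
        (by norm_num) (fun x hx => ((S.hv x (by linarith [hx.1])).neg).sub
          ((hasDerivAt_id x).const_mul _)) ?_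
      intro x hx
      have a1 := hQ x (by linarith [hx.1]) hx.2
      have a2 := hmono 2 x (by norm_num) hx.1 hx.2
      have a3 := hu0 2 (by norm_num) (by norm_num)
      nlinarith
    have k3 := hu0 1 (by norm_num) (by norm_num)
    have k4 := hcon 4 ⟨by norm_num, le_rfl⟩
    linarith
  have hzero : ∀ t, 0 ≤ t → t ≤ 4 → v t ≤ 0 → ∃ s ∈ Set.Icc 0 t, v s = 0 := by
    intro t h0 h4 hv
    have := intermediate_value_Icc' h0 (hvc.mono (Set.Icc_subset_Icc_right h4))
    obtain ⟨s, hs, hs'⟩ := this ⟨hv, by rw [S.v0]; norm_num⟩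
    exact ⟨s, hs, hs'⟩
  have hcomp : IsCompact (Set.Icc (0 : ℝ) 4 ∩ v ⁻¹' {0}) :=
    isCompact_Icc.of_isClosed_subset (hvc.preimage_isClosed_of_isClosed isClosed_Icc isClosed_singleton)
      Set.inter_subset_left
  obtain ⟨x1, hx1, hleast⟩ := hcomp.exists_isLeast (by
    obtain ⟨t, ht, hv⟩ := hex
    obtain ⟨s, hs, hs'⟩ := hzero t ht.1 ht.2 hv
    exact ⟨s, ⟨hs.1, hs.2.trans ht.2⟩, hs'⟩)
  have hx0 : 0 ≤ x1 := hx1.1.1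
  have hx4 : x1 ≤ 4 := hx1.1.2
  have hvx : v x1 = 0 := hx1.2
  have hvpos : ∀ t, 0 ≤ t → t ≤ x1 → 0 ≤ v t := by
    intro t h0 ht
    by_contra hneg
    push Not at hneg
    obtain ⟨s, hs, hs'⟩ := hzero t h0 (ht.trans hx4) hneg.le
    have := hleast ⟨⟨hs.1, by linarith [hs.2]⟩, hs'⟩
    have e : t = x1 := le_antisymm ht (this.trans hs.2)
    rw [e, hvx] at hneg
    exact lt_irrefl _ hneg
  have hmono : ∀ s t, 0 ≤ s → s ≤ t → t ≤ x1 → u s ≤ u t := by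
    intro s t hs hst ht
    exact le_of_hasDeriv_nonneg hst (fun x hx => S.hu x (hs.trans hx.1))
      (fun x hx => (hvpos x (hs.trans hx.1) (hx.2.trans ht)))
  have hu0 : ∀ t, 0 ≤ t → t ≤ x1 → 0 ≤ u t := by
    intro t h0 h4
    have := hmono 0 t le_rfl h0 h4
    rwa [S.u0] at this
  obtain ⟨tm, htm, hmax⟩ := isCompact_Icc.exists_isMaxOn (Set.nonempty_Icc.2 hx0)
    (hvc.mono (Set.Icc_subset_Icc_right hx4))
  have hmax' : ∀ t, 0 ≤ t → t ≤ x1 → v t ≤ v tm := fun t h0 ht => hmax ⟨h0, ht⟩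
  have hM1 : 1 ≤ v tm := by rw [← S.v0]; exact hmax' 0 le_rfl hx0
  have huM : ∀ t, 0 ≤ t → t ≤ x1 → u t ≤ v tm * t := by
    intro t h0 ht
    have := le_of_hasDeriv_nonneg (f := fun x => v tm * x - u x) (f' := fun x => v tm * 1 - v x) h0
      (fun x hx => ((hasDerivAt_id x).const_mul _).sub (S.hu x hx.1))
      (fun x hx => by have := hmax' x hx.1 (hx.2.trans ht); linarith)
    simp only [S.u0] at this
    linarith
  have hM2 : v tm ≤ 2 := by
    have := le_of_hasDeriv_nonneg (f := fun x => κ * ε * (4 * v tm) * x - v x)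
      (f' := fun x => κ * ε * (4 * v tm) * 1 - (-(wt χ ε x - κ * ε) * u x)) htm.1
      (fun x hx => ((hasDerivAt_id x).const_mul _).sub (S.hv x hx.1))
      (fun x hx => by
        have hxx := hx.2.trans htm.2
        have a1 := huM x hx.1 hxx
        have a2 := hu0 x hx.1 hxx
        have a3 := @wt_nonneg χ ε x hx.1
        have a4 : v tm * x ≤ 4 * v tm := by nlinarith
        have a5 : κ * ε * u x ≤ κ * ε * (4 * v tm) := mul_le_mul_of_nonneg_left (a1.trans a4) hκε.le
        nlinarith [mul_nonneg a3 a2])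
    simp only [S.v0] at this
    have b1 : κ * ε * (4 * v tm) * tm ≤ 1 / 64 * (4 * v tm) * 4 := by
      have : κ * ε * (4 * v tm) ≤ 1 / 64 * (4 * v tm) := mul_le_mul_of_nonneg_right h1 (by linarith)
      have h4 : tm ≤ 4 := htm.2.trans hx4
      exact mul_le_mul this h4 htm.1 (by linarith)
    linarith
  have hu2 : ∀ t, 0 ≤ t → t ≤ x1 → u t ≤ 2 * t := by
    intro t h0 ht
    have := huM t h0 ht
    nlinarith
  have hv2 : ∀ t, 0 ≤ t → t ≤ x1 → t ≤ 1 → 1 - t ^ 2 ≤ v t := by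
    intro t h0 ht ht1
    have := le_of_hasDeriv_nonneg (f := fun x => v x + x ^ 2)
      (f' := fun x => -(wt χ ε x - κ * ε) * u x + 2 * x) h0
      (fun x hx => (S.hv x hx.1).add (by simpa using hasDerivAt_pow 2 x))
      (fun x hx => by
        have hxx := hx.2.trans ht
        have a1 := hu2 x hx.1 hxx
        have a2 := hu0 x hx.1 hxx
        have a3 : wt χ ε x ≤ 1 := (wt_le_rpow hε.le hx.1).trans
          (Real.rpow_le_one hx.1 (hx.2.trans ht1) hχ)
        nlinarith [mul_nonneg hκε.le a2, mul_le_mul_of_nonneg_right a3 a2])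
    simp only [S.v0] at this
    linarith
  have hx1' : 1 ≤ x1 := by
    by_contra hlt
    push Not at hlt
    have := hv2 x1 hx0 le_rfl hlt.le
    rw [hvx] at this
    nlinarith
  refine ⟨x1, hx1', hx4, hvx, fun t h0 ht => ⟨hu0 t h0 ht, hu2 t h0 ht⟩, ?_⟩
  have k := le_of_hasDeriv_nonneg (f := fun x => u x - x + x ^ 3 / 3)
      (f' := fun x => v x - 1 + x ^ 2) (zero_le_one)
      (fun x hx => by
        have := ((S.hu x hx.1).sub (hasDerivAt_id x)).add ((hasDerivAt_pow 3 x).div_const 3)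
        exact this.congr_deriv (by push_cast; ring))
      (fun x hx => by
        have := hv2 x hx.1 (hx.2.trans hx1') hx.2
        linarith)
  simp only [S.u0] at k
  have := hmono 1 x1 zero_le_one hx1' le_rfl
  norm_num at k
  linarith

theorem middle_region {χ κ ε : ℝ} {u v : ℝ → ℝ} (hχ : 0 ≤ χ) (hκ : 0 < κ) (hε : 0 < ε)
    (h1 : κ * ε ≤ 1 / 64) (S : Sol χ κ ε u v) {x1 b : ℝ} (hx1 : 1 ≤ x1) (hv1 : v x1 = 0)
    (hb : ε * b ^ 2 ≤ 1) (t : ℝ) (ht1 : x1 ≤ t) (htb : t ≤ b) :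
    u t ^ 2 + v t ^ 2 / (wt χ ε t - κ * ε) ≤ Real.exp (2 * (ε * t ^ 2)) * u x1 ^ 2 ∧
    (wt χ ε x1 - κ * ε) * u x1 ^ 2 ≤
      Real.exp (2 * (ε * t ^ 2)) * (v t ^ 2 + (wt χ ε t - κ * ε) * u t ^ 2) ∧
    0 < wt χ ε t - κ * ε := by
  have hκε : 0 < κ * ε := mul_pos hκ hε
  have hw : ∀ x, x1 ≤ x → x ≤ t → 1 / 4 ≤ wt χ ε x := by
    intro x hx hxt
    have hx1' : 1 ≤ x := hx1.trans hx
    have e1 : ε * x ^ 2 ≤ 1 := by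
      refine le_trans ?_ hb
      gcongr; linarith
    have e2 : 1 / 4 ≤ Real.exp (-(ε * x ^ 2)) := by
      have : Real.exp (-1) ≤ Real.exp (-(ε * x ^ 2)) := Real.exp_le_exp.2 (by linarith)
      have := Real.exp_neg_one_gt_d9
      linarith
    have e3 : 1 ≤ x ^ χ := Real.one_le_rpow hx1' hχ
    unfold wt
    nlinarith
  have hQd : ∀ x, x1 ≤ x → HasDerivAt (fun x => wt χ ε x - κ * ε) ((χ / x - 2 * ε * x) * wt χ ε x) x :=
    fun x hx => (wt_hasDeriv (by linarith)).sub_const _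
  have hexp : ∀ (c x : ℝ), HasDerivAt (fun x : ℝ => Real.exp (c * (ε * x ^ 2)))
      (Real.exp (c * (ε * x ^ 2)) * (c * (ε * (2 * x)))) x := by
    intro c x
    have := ((((hasDerivAt_pow 2 x).const_mul ε).const_mul c).exp)
    simpa using this
  have hkey : ∀ x, x1 ≤ x → x ≤ t →
      0 ≤ 4 * ε * x * (wt χ ε x - κ * ε) + (χ / x - 2 * ε * x) * wt χ ε x := by
    intro x hx hxt
    have hx0 : 0 < x := by linarith
    have a1 := hw x hx hxt
    have a2 : 0 ≤ χ / x * wt χ ε x := by positivity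
    have a3 : 0 ≤ 2 * ε * x * (wt χ ε x - 2 * (κ * ε)) := by
      apply mul_nonneg (by positivity); linarith
    nlinarith
  have hQpos : ∀ x, x1 ≤ x → x ≤ t → 0 < wt χ ε x - κ * ε := by
    intro x hx hxt
    have a1 := hw x hx hxt
    linarith
  refine ⟨?_, ?_, hQpos t ht1 le_rfl⟩
  · have k := le_of_hasDeriv_nonneg
      (f := fun x => -(Real.exp (-2 * (ε * x ^ 2)) * (u x ^ 2 + v x ^ 2 / (wt χ ε x - κ * ε))))
      (f' := fun x => Real.exp (-2 * (ε * x ^ 2)) * (4 * ε * x * u x ^ 2 + v x ^ 2 *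
        (4 * ε * x * (wt χ ε x - κ * ε) + (χ / x - 2 * ε * x) * wt χ ε x) / (wt χ ε x - κ * ε) ^ 2)) ht1
      (fun x hx => by
        have hx0 : 0 ≤ x := by linarith [hx.1]
        have hq := (hQpos x hx.1 hx.2).ne'
        have d1 := ((S.hu x hx0).pow 2).add (((S.hv x hx0).pow 2).div (hQd x hx.1) hq)
        have d2 := ((hexp (-2) x).mul d1).neg
        refine d2.congr_deriv ?_
        simp only [Pi.add_apply, Pi.pow_apply, Pi.div_apply]
        generalize (χ / x - 2 * ε * x) * wt χ ε x = Q'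
        generalize wt χ ε x - κ * ε = Q at *
        field_simp
        push_cast
        ring)
      (fun x hx => by
        have hx0 : 0 ≤ x := by linarith [hx.1]
        have := hkey x hx.1 hx.2
        positivity)
    simp only [hv1, ne_eq, OfNat.ofNat_ne_zero, not_false_eq_true, zero_pow, zero_div, add_zero, zero_add] at k
    have e1 : Real.exp (-2 * (ε * x1 ^ 2)) ≤ 1 := by
      rw [Real.exp_le_one_iff]; nlinarith [mul_nonneg hε.le (sq_nonneg x1)]
    have e2 : Real.exp (-2 * (ε * t ^ 2)) * (u t ^ 2 + v t ^ 2 / (wt χ ε t - κ * ε)) ≤ u x1 ^ 2 := by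
      nlinarith [sq_nonneg (u x1)]
    have e3 : Real.exp (2 * (ε * t ^ 2)) * Real.exp (-2 * (ε * t ^ 2)) = 1 := by
      rw [← Real.exp_add]; ring_nf; exact Real.exp_zero
    calc _ = Real.exp (2 * (ε * t ^ 2)) * (Real.exp (-2 * (ε * t ^ 2)) *
          (u t ^ 2 + v t ^ 2 / (wt χ ε t - κ * ε))) := by rw [← mul_assoc, e3, one_mul]
      _ ≤ _ := mul_le_mul_of_nonneg_left e2 (Real.exp_pos _).le
  · have k := le_of_hasDeriv_nonneg
      (f := fun x => (Real.exp (2 * (ε * x ^ 2)) * (v x ^ 2 + (wt χ ε x - κ * ε) * u x ^ 2)))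
      (f' := fun x => Real.exp (2 * (ε * x ^ 2)) * (4 * ε * x * v x ^ 2 + u x ^ 2 *
        (4 * ε * x * (wt χ ε x - κ * ε) + (χ / x - 2 * ε * x) * wt χ ε x))) ht1
      (fun x hx => by
        have hx0 : 0 ≤ x := by linarith [hx.1]
        have d1 := ((S.hv x hx0).pow 2).add ((hQd x hx.1).mul ((S.hu x hx0).pow 2))
        have d2 := ((hexp 2 x).mul d1)
        refine d2.congr_deriv ?_
        simp only [Pi.add_apply, Pi.pow_apply, Pi.mul_apply]
        push_cast
        ring)
      (fun x hx => by
        have hx0 : 0 ≤ x := by linarith [hx.1]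
        have := hkey x hx.1 hx.2
        positivity)
    simp only [hv1, ne_eq, OfNat.ofNat_ne_zero, not_false_eq_true, zero_pow, zero_div, add_zero, zero_add] at k
    refine le_trans ?_ k
    have e1 : 1 ≤ Real.exp (2 * (ε * x1 ^ 2)) := by
      rw [Real.one_le_exp_iff]; positivity
    have := mul_nonneg (hQpos x1 le_rfl ht1).le (sq_nonneg (u x1))
    nlinarith

/-- amplitude function `wt ^ (-1/2)` -/
noncomputable def hh (χ ε t : ℝ) : ℝ := t ^ (-(χ / 2)) * Real.exp (ε * t ^ 2 / 2)

noncomputable def rr (χ ε t : ℝ) : ℝ := ε * t - χ / (2 * t)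

theorem hh_pos {χ ε t : ℝ} (ht : 0 < t) : 0 < hh χ ε t := by
  unfold hh; positivity

theorem wt_mul_hh {χ ε t : ℝ} (ht : 0 < t) : wt χ ε t * hh χ ε t ^ 2 = 1 := by
  unfold wt hh
  have e1 : t ^ χ * (t ^ (-(χ / 2))) ^ 2 = 1 := by
    rw [← Real.rpow_natCast, ← Real.rpow_mul ht.le, ← Real.rpow_add ht]
    push_cast; ring_nf; exact Real.rpow_zero t
  have e2 : Real.exp (-(ε * t ^ 2)) * (Real.exp (ε * t ^ 2 / 2)) ^ 2 = 1 := by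
    rw [← Real.exp_nat_mul, ← Real.exp_add]
    push_cast; ring_nf; exact Real.exp_zero
  calc _ = (t ^ χ * (t ^ (-(χ / 2))) ^ 2) * (Real.exp (-(ε * t ^ 2)) * (Real.exp (ε * t ^ 2 / 2)) ^ 2) := by ring
    _ = 1 := by rw [e1, e2, one_mul]

theorem wt_eq_hh {χ ε t : ℝ} (ht : 0 < t) : wt χ ε t = 1 / hh χ ε t ^ 2 := by
  have := @wt_mul_hh χ ε t ht
  have h := (@hh_pos χ ε t ht).ne'
  field_simp; exact this

theorem hh_hasDeriv {χ ε t : ℝ} (ht : 0 < t) :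
    HasDerivAt (hh χ ε) (rr χ ε t * hh χ ε t) t := by
  have h1 : HasDerivAt (fun t : ℝ => t ^ (-(χ / 2))) (-(χ / 2) * t ^ (-(χ / 2) - 1)) t :=
    Real.hasDerivAt_rpow_const (Or.inl ht.ne')
  have h2 : HasDerivAt (fun t : ℝ => Real.exp (ε * t ^ 2 / 2))
      (Real.exp (ε * t ^ 2 / 2) * (ε * (2 * t) / 2)) t := by
    have := ((((hasDerivAt_pow 2 t).const_mul ε).div_const 2).exp)
    simpa using this
  have h3 := h1.mul h2
  have e : rr χ ε t * hh χ ε t = -(χ / 2) * t ^ (-(χ / 2) - 1) * Real.exp (ε * t ^ 2 / 2) +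
      t ^ (-(χ / 2)) * (Real.exp (ε * t ^ 2 / 2) * (ε * (2 * t) / 2)) := by
    rw [Real.rpow_sub_one ht.ne']; unfold hh rr; field_simp; ring
  rw [e]; exact h3

theorem rr_hasDeriv {χ ε t : ℝ} (ht : 0 < t) :
    HasDerivAt (rr χ ε) (ε + χ / (2 * t ^ 2)) t := by
  have h1 := ((hasDerivAt_id t).const_mul ε).sub
    ((hasDerivAt_const t χ).div ((hasDerivAt_id t).const_mul 2) (by simpa using ht.ne'))
  refine h1.congr_deriv ?_
  simp only [id]
  field_simp; ring

noncomputable def h2 (χ ε t : ℝ) : ℝ := (rr χ ε t ^ 2 + ε + χ / (2 * t ^ 2)) * hh χ ε t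

theorem h1_hasDeriv {χ ε t : ℝ} (ht : 0 < t) :
    HasDerivAt (fun t => rr χ ε t * hh χ ε t) (h2 χ ε t) t := by
  refine ((rr_hasDeriv ht).mul (hh_hasDeriv ht)).congr_deriv ?_
  unfold h2; ring

theorem h2_nonneg {χ ε t : ℝ} (hχ : 0 ≤ χ) (hε : 0 < ε) (ht : 0 < t) : 0 ≤ h2 χ ε t := by
  have := @hh_pos χ ε t ht
  unfold h2; positivity

theorem rr_mono {χ ε s t : ℝ} (hχ : 0 ≤ χ) (hε : 0 < ε) (hs : 0 < s) (hst : s ≤ t) :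
    rr χ ε s ≤ rr χ ε t := by
  unfold rr
  have : χ / (2 * t) ≤ χ / (2 * s) := by gcongr
  nlinarith

theorem hh_le_max {χ ε a t T : ℝ} (hχ : 0 ≤ χ) (hε : 0 < ε) (ha : 0 < a) (h1 : a ≤ t) (h2 : t ≤ T) :
    hh χ ε t ≤ max (hh χ ε a) (hh χ ε T) := by
  rcases le_total (rr χ ε t) 0 with h | h
  · apply le_max_of_le_left
    have := le_of_hasDeriv_nonneg (f := fun x => -hh χ ε x) h1
      (fun x hx => (hh_hasDeriv (by linarith [hx.1])).neg) (fun x hx => by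
        have b0 : 0 < x := by linarith [hx.1]
        have b1 := rr_mono hχ hε b0 hx.2
        have b2 := @hh_pos χ ε x b0
        nlinarith)
    simpa using this
  · apply le_max_of_le_right
    exact le_of_hasDeriv_nonneg h2
      (fun x hx => (hh_hasDeriv (by linarith [hx.1]))) (fun x hx => by
        have b0 : 0 < x := by linarith [hx.1]
        have b1 := rr_mono hχ hε (by linarith) hx.1
        have b2 := @hh_pos χ ε x b0
        exact mul_nonneg (h.trans b1) b2.le)

/-- amplitude -/
noncomputable def F0 (χ ε : ℝ) (u v : ℝ → ℝ) (t : ℝ) : ℝ :=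
  hh χ ε t * v t ^ 2 + u t ^ 2 / hh χ ε t

theorem F0_nonneg {χ ε t : ℝ} {u v : ℝ → ℝ} (ht : 0 < t) : 0 ≤ F0 χ ε u v t := by
  have := @hh_pos χ ε t ht
  unfold F0; positivity

theorem F0_uv {χ ε t : ℝ} {u v : ℝ → ℝ} (ht : 0 < t) : 2 * |u t * v t| ≤ F0 χ ε u v t := by
  have h := @hh_pos χ ε t ht
  unfold F0
  have h1 : hh χ ε t * v t ^ 2 + u t ^ 2 / hh χ ε t =
    (hh χ ε t ^ 2 * v t ^ 2 + u t ^ 2) / hh χ ε t := by field_simp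
  rw [h1, le_div_iff₀ h]
  rcases abs_cases (u t * v t) with ⟨e, _⟩ | ⟨e, _⟩ <;> rw [e]
  · nlinarith [sq_nonneg (hh χ ε t * v t - u t)]
  · nlinarith [sq_nonneg (hh χ ε t * v t + u t)]

theorem F0_u {χ ε t : ℝ} {u v : ℝ → ℝ} (ht : 0 < t) : u t ^ 2 ≤ hh χ ε t * F0 χ ε u v t := by
  have h := @hh_pos χ ε t ht
  unfold F0
  have : hh χ ε t * (hh χ ε t * v t ^ 2 + u t ^ 2 / hh χ ε t) = (hh χ ε t * v t) ^ 2 + u t ^ 2 := by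
    field_simp
  rw [this]; nlinarith [sq_nonneg (hh χ ε t * v t)]

theorem F0_v {χ ε t : ℝ} {u v : ℝ → ℝ} (ht : 0 < t) : hh χ ε t * v t ^ 2 ≤ F0 χ ε u v t := by
  have h := @hh_pos χ ε t ht
  unfold F0
  have : 0 ≤ u t ^ 2 / hh χ ε t := by positivity
  linarith

noncomputable def GG (χ κ ε : ℝ) (u v : ℝ → ℝ) (t : ℝ) : ℝ :=
  hh χ ε t * v t ^ 2 - rr χ ε t * hh χ ε t * (u t * v t) + u t ^ 2 / hh χ ε t
    - κ * ε * (hh χ ε t * u t ^ 2)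

theorem GG_hasDeriv {χ κ ε t : ℝ} {u v : ℝ → ℝ} (S : Sol χ κ ε u v) (ht : 0 < t) :
    HasDerivAt (GG χ κ ε u v)
      (-(h2 χ ε t) * (u t * v t) - 2 * (κ * ε) * (rr χ ε t * hh χ ε t) * u t ^ 2) t := by
  have h := @hh_pos χ ε t ht
  have dh := @hh_hasDeriv χ ε t ht
  have du := S.hu t ht.le
  have dv := S.hv t ht.le
  rw [wt_eq_hh ht] at dv
  have d1 := @h1_hasDeriv χ ε t ht
  have d := (((dh.mul (dv.pow 2)).sub (d1.mul (du.mul dv))).add ((du.pow 2).div dh h.ne')).sub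
    ((dh.mul (du.pow 2)).const_mul (κ * ε))
  refine d.congr_deriv ?_
  simp only [Pi.pow_apply, Pi.mul_apply]
  generalize h2 χ ε t = H
  generalize hh χ ε t = z at *
  field_simp
  push_cast
  ring

theorem transport {χ κ ε a T : ℝ} {u v : ℝ → ℝ} (hχ : 0 ≤ χ) (hκ : 0 < κ) (hε : 0 < ε)
    (S : Sol χ κ ε u v) (ha : 0 < a)
    (c1 : -(1 / 2) ≤ rr χ ε a * hh χ ε a) (c2 : rr χ ε T * hh χ ε T ≤ 1 / 2)
    (c3 : κ * Real.sqrt ε * hh χ ε a ≤ 1 / 4) (c4 : κ * Real.sqrt ε * hh χ ε T ≤ 1 / 4)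
    (c5 : κ * ε * hh χ ε a ^ 2 ≤ 1 / 4) (c6 : κ * ε * hh χ ε T ^ 2 ≤ 1 / 4)
    (t : ℝ) (h1 : a ≤ t) (hT : t ≤ T) :
    F0 χ ε u v t ≤ 3 * Real.exp 2 * F0 χ ε u v a ∧ F0 χ ε u v a ≤ 3 * Real.exp 2 * F0 χ ε u v t := by
  have hmono : ∀ s t, 0 < s → s ≤ t → rr χ ε s * hh χ ε s ≤ rr χ ε t * hh χ ε t := by
    intro s t hs hst
    exact le_of_hasDeriv_nonneg (f := fun t => rr χ ε t * hh χ ε t) hst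
      (fun x hx => h1_hasDeriv (by linarith [hx.1]))
      (fun x hx => h2_nonneg hχ hε (by linarith [hx.1]))
  have hbase : ∀ x, a ≤ x → x ≤ T → |rr χ ε x * hh χ ε x| ≤ 1 / 2 ∧
      κ * Real.sqrt ε * hh χ ε x ≤ 1 / 4 ∧ κ * ε * hh χ ε x ^ 2 ≤ 1 / 4 := by
    intro x hx hxT
    have x0 : 0 < x := by linarith
    have hp := @hh_pos χ ε x x0
    refine ⟨abs_le.2 ⟨by linarith [hmono a x ha hx], by linarith [hmono x T x0 hxT]⟩, ?_⟩
    have hsq := Real.sqrt_nonneg ε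
    have hks : 0 ≤ κ * Real.sqrt ε := by positivity
    have hke : 0 ≤ κ * ε := by positivity
    rcases le_max_iff.1 (hh_le_max hχ hε ha hx hxT) with h | h
    · exact ⟨(mul_le_mul_of_nonneg_left h hks).trans c3,
        (mul_le_mul_of_nonneg_left (pow_le_pow_left₀ hp.le h 2) hke).trans c5⟩
    · exact ⟨(mul_le_mul_of_nonneg_left h hks).trans c4,
        (mul_le_mul_of_nonneg_left (pow_le_pow_left₀ hp.le h 2) hke).trans c6⟩
  have hGF : ∀ x, a ≤ x → x ≤ T → F0 χ ε u v x / 2 ≤ GG χ κ ε u v x ∧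
      GG χ κ ε u v x ≤ 3 / 2 * F0 χ ε u v x := by
    intro x hx hxT
    have x0 : 0 < x := by linarith
    obtain ⟨b1, b2, b3⟩ := hbase x hx hxT
    have f1 := @F0_uv χ ε x u v x0
    have f2 := @F0_u χ ε x u v x0
    have f3 := @F0_nonneg χ ε x u v x0
    have hp := @hh_pos χ ε x x0
    have e1 : GG χ κ ε u v x = F0 χ ε u v x - rr χ ε x * hh χ ε x * (u x * v x)
      - κ * ε * (hh χ ε x * u x ^ 2) := by unfold GG F0; ring
    have e2 : |rr χ ε x * hh χ ε x * (u x * v x)| ≤ F0 χ ε u v x / 4 := by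
      rw [abs_mul]
      calc _ ≤ 1 / 2 * (F0 χ ε u v x / 2) := by
            apply mul_le_mul b1 (by linarith) (abs_nonneg _) (by norm_num)
        _ = _ := by ring
    have e3 : κ * ε * (hh χ ε x * u x ^ 2) ≤ F0 χ ε u v x / 4 := by
      calc _ ≤ κ * ε * (hh χ ε x * (hh χ ε x * F0 χ ε u v x)) := by gcongr
        _ = κ * ε * hh χ ε x ^ 2 * F0 χ ε u v x := by ring
        _ ≤ 1 / 4 * F0 χ ε u v x := by gcongr
        _ = _ := by ring
    have e4 : 0 ≤ κ * ε * (hh χ ε x * u x ^ 2) := by positivity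
    rw [e1]
    have := abs_le.1 e2
    constructor <;> linarith [this.1, this.2]
  have hGd : ∀ x, a ≤ x → x ≤ T → |(-(h2 χ ε x) * (u x * v x)
      - 2 * (κ * ε) * (rr χ ε x * hh χ ε x) * u x ^ 2)| ≤ 2 * h2 χ ε x * GG χ κ ε u v x := by
    intro x hx hxT
    have x0 : 0 < x := by linarith
    obtain ⟨b1, b2, b3⟩ := hbase x hx hxT
    have f1 := @F0_uv χ ε x u v x0
    have f2 := @F0_u χ ε x u v x0
    have f3 := @F0_nonneg χ ε x u v x0
    have hp := @hh_pos χ ε x x0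
    have h20 := @h2_nonneg χ ε x hχ hε x0
    have e1 : |h2 χ ε x * (u x * v x)| ≤ h2 χ ε x * F0 χ ε u v x / 2 := by
      rw [abs_mul, abs_of_nonneg h20]
      nlinarith
    have e2 : 2 * Real.sqrt ε * |rr χ ε x| * hh χ ε x ≤ h2 χ ε x := by
      unfold h2
      have : 0 ≤ χ / (2 * x ^ 2) := by positivity
      have k : 2 * Real.sqrt ε * |rr χ ε x| ≤ rr χ ε x ^ 2 + ε + χ / (2 * x ^ 2) := by
        have := Real.sq_sqrt hε.le
        nlinarith [sq_nonneg (Real.sqrt ε - |rr χ ε x|), sq_abs (rr χ ε x)]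
      exact mul_le_mul_of_nonneg_right k hp.le
    have e3 : |2 * (κ * ε) * (rr χ ε x * hh χ ε x) * u x ^ 2| ≤ h2 χ ε x * F0 χ ε u v x / 4 := by
      have : |2 * (κ * ε) * (rr χ ε x * hh χ ε x) * u x ^ 2| =
          (2 * Real.sqrt ε * |rr χ ε x| * hh χ ε x) * (κ * Real.sqrt ε) * u x ^ 2 := by
        rw [abs_mul, abs_mul (2 * (κ * ε)), abs_mul (rr χ ε x), abs_of_pos hp,
          abs_of_nonneg (sq_nonneg (u x)), abs_of_pos (show 0 < 2 * (κ * ε) by positivity)]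
        have hs := Real.mul_self_sqrt hε.le
        linear_combination (-(2 * κ * |rr χ ε x| * hh χ ε x * u x ^ 2)) * hs
      rw [this]
      have hsq := Real.sqrt_nonneg ε
      calc _ ≤ h2 χ ε x * (κ * Real.sqrt ε) * (hh χ ε x * F0 χ ε u v x) := by gcongr
        _ = h2 χ ε x * F0 χ ε u v x * (κ * Real.sqrt ε * hh χ ε x) := by ring
        _ ≤ h2 χ ε x * F0 χ ε u v x * (1 / 4) := by gcongr
        _ = _ := by ring
    have e4 := (hGF x hx hxT).1
    have e5 : h2 χ ε x * (F0 χ ε u v x / 2) ≤ h2 χ ε x * GG χ κ ε u v x :=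
      mul_le_mul_of_nonneg_left e4 h20
    have e6 : 0 ≤ h2 χ ε x * F0 χ ε u v x := mul_nonneg h20 f3
    have a1 := abs_le.1 e1
    have a2 := abs_le.1 e3
    rw [abs_le]
    constructor <;> linarith [a1.1, a1.2, a2.1, a2.2]
  have hexp : ∀ (c x : ℝ), 0 < x → HasDerivAt (fun x : ℝ => Real.exp (c * (rr χ ε x * hh χ ε x)))
      (Real.exp (c * (rr χ ε x * hh χ ε x)) * (c * h2 χ ε x)) x := by
    intro c x hx
    exact (((h1_hasDeriv hx).const_mul c).exp)
  have up : Real.exp (-2 * (rr χ ε t * hh χ ε t)) * GG χ κ ε u v t ≤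
      Real.exp (-2 * (rr χ ε a * hh χ ε a)) * GG χ κ ε u v a := by
    have := le_of_hasDeriv_nonneg
      (f := fun x => -(Real.exp (-2 * (rr χ ε x * hh χ ε x)) * GG χ κ ε u v x)) h1
      (fun x hx => ((hexp (-2) x (by linarith [hx.1])).mul (GG_hasDeriv S (by linarith [hx.1]))).neg)
      (fun x hx => by
        have b := (abs_le.1 (hGd x hx.1 (hx.2.trans hT))).2
        have e := Real.exp_pos (-2 * (rr χ ε x * hh χ ε x))
        nlinarith)
    linarith
  have lo : Real.exp (2 * (rr χ ε a * hh χ ε a)) * GG χ κ ε u v a ≤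
      Real.exp (2 * (rr χ ε t * hh χ ε t)) * GG χ κ ε u v t := by
    exact le_of_hasDeriv_nonneg
      (f := fun x => (Real.exp (2 * (rr χ ε x * hh χ ε x)) * GG χ κ ε u v x)) h1
      (fun x hx => ((hexp 2 x (by linarith [hx.1])).mul (GG_hasDeriv S (by linarith [hx.1]))))
      (fun x hx => by
        have b := (abs_le.1 (hGd x hx.1 (hx.2.trans hT))).1
        have e := Real.exp_pos (2 * (rr χ ε x * hh χ ε x))
        nlinarith)
  have haT : a ≤ T := h1.trans hT
  have t0 : 0 < t := by linarith
  obtain ⟨ba, -, -⟩ := hbase a le_rfl haT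
  obtain ⟨bt, -, -⟩ := hbase t h1 hT
  have ba := abs_le.1 ba
  have bt := abs_le.1 bt
  obtain ⟨ga1, ga2⟩ := hGF a le_rfl haT
  obtain ⟨gt1, gt2⟩ := hGF t h1 hT
  have fa := @F0_nonneg χ ε a u v ha
  have ft := @F0_nonneg χ ε t u v t0
  have E : Real.exp 2 = Real.exp 1 * Real.exp 1 := by rw [← Real.exp_add]; norm_num
  have E1 : Real.exp 1 * Real.exp (-1) = 1 := by rw [← Real.exp_add]; norm_num
  have p1 := Real.exp_pos 1
  constructor
  · have k1 : Real.exp (-1) * GG χ κ ε u v t ≤ Real.exp 1 * GG χ κ ε u v a := by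
      calc _ ≤ Real.exp (-2 * (rr χ ε t * hh χ ε t)) * GG χ κ ε u v t := by
            apply mul_le_mul_of_nonneg_right (Real.exp_le_exp.2 (by linarith [bt.2])) (by linarith)
        _ ≤ _ := up
        _ ≤ _ := by
            apply mul_le_mul_of_nonneg_right (Real.exp_le_exp.2 (by linarith [ba.1])) (by linarith)
    have k2 := mul_le_mul_of_nonneg_left k1 p1.le
    rw [← mul_assoc, E1, ← mul_assoc, ← E] at k2
    nlinarith [mul_le_mul_of_nonneg_left ga2 (Real.exp_pos 2).le]
  · have k1 : Real.exp (-1) * GG χ κ ε u v a ≤ Real.exp 1 * GG χ κ ε u v t := by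
      calc _ ≤ Real.exp (2 * (rr χ ε a * hh χ ε a)) * GG χ κ ε u v a := by
            apply mul_le_mul_of_nonneg_right (Real.exp_le_exp.2 (by linarith [ba.1])) (by linarith)
        _ ≤ _ := lo
        _ ≤ _ := by
            apply mul_le_mul_of_nonneg_right (Real.exp_le_exp.2 (by linarith [bt.2])) (by linarith)
    have k2 := mul_le_mul_of_nonneg_left k1 p1.le
    rw [← mul_assoc, E1, ← mul_assoc, ← E] at k2
    nlinarith [mul_le_mul_of_nonneg_left gt2 (Real.exp_pos 2).le]

theorem eventually_small (D r : ℝ) (hr : 0 < r) :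
    ∀ᶠ ε : ℝ in nhdsWithin 0 (Set.Ioi 0), D * ε ^ r ≤ 1 := by
  have h : Filter.Tendsto (fun ε : ℝ => D * ε ^ r) (nhdsWithin 0 (Set.Ioi 0)) (nhds 0) := by
    have h1 : Filter.Tendsto (fun ε : ℝ => D * ε ^ r) (nhds 0) (nhds (D * 0 ^ r)) :=
      ((Real.continuousAt_rpow_const 0 r (Or.inr hr.le)).const_mul D)
    rw [Real.zero_rpow hr.ne', mul_zero] at h1
    exact h1.mono_left nhdsWithin_le_nhds
  exact (h.eventually (gt_mem_nhds one_pos)).mono fun x hx => le_of_lt hx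

theorem exists_T (χ : ℝ) (hχ : 0 ≤ χ) :
    ∀ᶠ ε : ℝ in nhdsWithin 0 (Set.Ioi 0), ∃ T : ℝ, 2 * ε ^ (-(1 / 2) : ℝ) ≤ T ∧
      T ≤ ε ^ (-(11 / 20) : ℝ) ∧ ε ^ (-(2 / 5) : ℝ) ≤ hh χ ε T ∧ hh χ ε T ≤ ε ^ (-(5 / 12) : ℝ) ∧
      χ ≤ ε * T ^ 2 := by
  set β : ℝ := χ / 2 + 5 / 6 with hβ
  have hβ0 : 0 < β := by positivity
  set η : ℝ := 1 / (15 * (χ + 1)) with hη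
  have hη0 : 0 < η := by positivity
  have ev : ∀ᶠ x : ℝ in Filter.atTop, β * Real.log x ≤ x ^ η := by
    have := (isLittleO_log_rpow_atTop hη0).bound (show 0 < 1 / β by positivity)
    filter_upwards [this, Filter.eventually_ge_atTop 1] with x hx hx1
    have h0 : 0 ≤ x ^ η := by positivity
    rw [Real.norm_eq_abs, Real.norm_eq_abs, abs_of_nonneg h0] at hx
    have := (le_abs_self _).trans hx
    calc β * Real.log x ≤ β * (1 / β * x ^ η) := by gcongr
      _ = x ^ η := by field_simp
  have ev2 : ∀ᶠ x : ℝ in Filter.atTop, (χ + 4) / β ≤ Real.log x :=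
    Real.tendsto_log_atTop.eventually_ge_atTop _
  have hinv : Filter.Tendsto (fun ε : ℝ => ε⁻¹) (nhdsWithin 0 (Set.Ioi 0)) Filter.atTop :=
    tendsto_inv_nhdsGT_zero
  filter_upwards [hinv.eventually ev, hinv.eventually ev2,
    hinv.eventually (Filter.eventually_ge_atTop 1), self_mem_nhdsWithin] with ε e1 e2 e3 e0
  have e0 : 0 < ε := e0
  set L := Real.log ε⁻¹ with hL
  have hLe : Real.log ε = -L := by rw [hL, Real.log_inv]; ring
  set τ := Real.sqrt (β * L) with hτ
  have hβL : χ + 4 ≤ β * L := by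
    rw [div_le_iff₀ hβ0] at e2; linarith
  have hτ2 : τ ^ 2 = β * L := Real.sq_sqrt (by linarith)
  have hτ0 : 0 ≤ τ := Real.sqrt_nonneg _
  have hτ1 : 2 ≤ τ := by nlinarith
  have hb2 : (ε ^ (-(1 / 2) : ℝ)) ^ 2 = ε⁻¹ := by
    rw [← Real.rpow_natCast, ← Real.rpow_mul e0.le]
    norm_num [Real.rpow_neg_one]
  have hbp : 0 < ε ^ (-(1 / 2) : ℝ) := by positivity
  have hT2 : ε * (τ * ε ^ (-(1 / 2) : ℝ)) ^ 2 = β * L := by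
    rw [mul_pow, hb2, hτ2]; field_simp
  have hinvr : ∀ r : ℝ, (ε⁻¹) ^ r = ε ^ (-r) := fun r => by
    rw [Real.inv_rpow e0.le, Real.rpow_neg e0.le]
  have hhT : hh χ ε (τ * ε ^ (-(1 / 2) : ℝ)) = τ ^ (-(χ / 2)) * ε ^ (-(5 / 12) : ℝ) := by
    unfold hh
    rw [hT2, Real.mul_rpow hτ0 hbp.le, ← Real.rpow_mul e0.le, mul_assoc]
    congr 1
    have : Real.exp (β * L / 2) = ε ^ (-(β / 2)) := by
      rw [Real.rpow_def_of_pos e0, hLe]; congr 1; ring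
    rw [this, ← Real.rpow_add e0]
    congr 1
    rw [hβ]; ring
  have hτup : τ ≤ ε ^ (-(η / 2)) := by
    rw [← hinvr]
    rw [hτ]
    apply Real.sqrt_le_iff.2
    refine ⟨by positivity, ?_⟩
    rw [← Real.rpow_natCast, ← Real.rpow_mul (by positivity)]
    refine e1.trans (le_of_eq ?_)
    congr 1; push_cast; ring
  have hε1 : ε ≤ 1 := by
    rw [one_le_inv₀ e0] at e3; exact e3
  refine ⟨τ * ε ^ (-(1 / 2) : ℝ), by gcongr, ?_, ?_, ?_, ?_⟩
  · calc τ * ε ^ (-(1 / 2) : ℝ) ≤ ε ^ (-(η / 2)) * ε ^ (-(1 / 2) : ℝ) := by gcongr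
      _ = ε ^ (-(η / 2) + -(1 / 2)) := by rw [Real.rpow_add e0]
      _ ≤ _ := by
        apply Real.rpow_le_rpow_of_exponent_ge e0 hε1
        have : η ≤ 1 / 10 := by
          rw [hη, div_le_div_iff₀ (by positivity) (by norm_num)]; nlinarith
        linarith
  · rw [hhT]
    have k1 : ε ^ (1 / 60 : ℝ) ≤ τ ^ (-(χ / 2)) := by
      calc ε ^ (1 / 60 : ℝ) ≤ ε ^ (-(η / 2) * (-(χ / 2))) := by
            apply Real.rpow_le_rpow_of_exponent_ge e0 hε1
            have : η * χ ≤ 1 / 15 := by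
              rw [hη, one_div_mul_eq_div, div_le_div_iff₀ (by positivity) (by norm_num)]; nlinarith
            nlinarith
        _ = (ε ^ (-(η / 2))) ^ (-(χ / 2)) := by rw [Real.rpow_mul e0.le]
        _ ≤ _ := Real.rpow_le_rpow_of_nonpos (by linarith) hτup (by linarith)
    calc ε ^ (-(2 / 5) : ℝ) = ε ^ (1 / 60 : ℝ) * ε ^ (-(5 / 12) : ℝ) := by
          rw [← Real.rpow_add e0]; norm_num
      _ ≤ _ := by gcongr
  · rw [hhT]
    have : τ ^ (-(χ / 2)) ≤ 1 := Real.rpow_le_one_of_one_le_of_nonpos (by linarith) (by linarith)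
    have h0 : 0 ≤ ε ^ (-(5 / 12) : ℝ) := by positivity
    nlinarith
  · rw [hT2]; linarith

structure Good (χ κ ε C1 : ℝ) (u v : ℝ → ℝ) (x1 T : ℝ) : Prop where
  x1_ge : 1 ≤ x1
  x1_le : x1 ≤ 4
  vx1 : v x1 = 0
  inner : ∀ t, 0 ≤ t → t ≤ x1 → 0 ≤ u t ∧ u t ≤ 2 * t
  ux1 : 2 / 3 ≤ u x1
  mid : ∀ t, x1 ≤ t → t ≤ ε ^ (-(1 / 2) : ℝ) → |u t| ≤ u x1 * (1 + 2 * (ε * t ^ 2))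
  a_le : 2 * χ + 4 ≤ ε ^ (-(1 / 2) : ℝ)
  T_ge : 2 * ε ^ (-(1 / 2) : ℝ) ≤ T
  T_le : T ≤ ε ^ (-(11 / 20) : ℝ)
  hT_ge : ε ^ (-(2 / 5) : ℝ) ≤ hh χ ε T
  hh_le : ∀ t, 2 * χ + 4 ≤ t → t ≤ T → hh χ ε t ≤ ε ^ (-(5 / 12) : ℝ)
  chi_le : χ ≤ ε * T ^ 2
  F_le : ∀ t, 2 * χ + 4 ≤ t → t ≤ T → F0 χ ε u v t ≤ C1
  F_ge : ∀ t, 2 * χ + 4 ≤ t → t ≤ T → 1 ≤ C1 * F0 χ ε u v t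

theorem le_of_sq_aux {x : ℝ} (h : x ^ 2 ≤ 4) : x ≤ 2 := by nlinarith

theorem aux_rr {x h : ℝ} (hx : -(1 / 4) ≤ x) (h0 : 0 ≤ h) (h2 : h ≤ 2) : -(1 / 2) ≤ x * h := by
  nlinarith

set_option maxHeartbeats 1000000 in
theorem exists_good (χ κ : ℝ) (hχ : 0 ≤ χ) (hκ : 0 < κ) :
    ∃ C1 : ℝ, 1 ≤ C1 ∧ ∀ᶠ ε : ℝ in nhdsWithin 0 (Set.Ioi 0), ∀ u v, Sol χ κ ε u v →
      ∃ x1 T, Good χ κ ε C1 u v x1 T := by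
  set a : ℝ := 2 * χ + 4 with ha
  have ha1 : 1 ≤ a := by linarith
  have ha0 : 0 < a := by linarith
  set m : ℝ := a ^ (χ / 2) with hm
  have hm1 : 1 ≤ m := Real.one_le_rpow ha1 (by linarith)
  have hE2 : 1 ≤ Real.exp 2 := Real.one_le_exp (by norm_num)
  refine ⟨384 * Real.exp 2 * Real.exp 2 * m, ?_, ?_⟩
  · have : 1 ≤ Real.exp 2 * Real.exp 2 := one_le_mul_of_one_le_of_one_le hE2 hE2
    nlinarith
  have evT := exists_T χ hχ
  filter_upwards [evT, eventually_small (64 * (κ + 1)) (1 / 30) (by norm_num),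
    eventually_small (a ^ 2) 1 (by norm_num), eventually_small 64 1 (by norm_num),
    eventually_small (2 : ℝ) (5 / 12) (by norm_num), self_mem_nhdsWithin] with
    ε hT hs hs2 hs3 hs4 hε u v S
  have hε : 0 < ε := hε
  rw [Real.rpow_one] at hs2 hs3
  have hε1 : ε ≤ 1 := by linarith
  have hsm : ∀ r : ℝ, 1 / 30 ≤ r → κ * ε ^ r ≤ 1 / 64 ∧ ε ^ r ≤ 1 / 64 := by
    intro r hr
    have h1 : ε ^ r ≤ ε ^ (1 / 30 : ℝ) := Real.rpow_le_rpow_of_exponent_ge hε hε1 hr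
    have h2 : 0 < ε ^ r := by positivity
    have h3 : (κ + 1) * ε ^ r ≤ (κ + 1) * ε ^ (1 / 30 : ℝ) := by gcongr
    have h4 : 0 < κ * ε ^ r := by positivity
    constructor <;> linarith
  have hκε : κ * ε ≤ 1 / 64 := by have := (hsm 1 (by norm_num)).1; rwa [Real.rpow_one] at this
  obtain ⟨T, T1, T2, T3, T4, T5⟩ := hT
  obtain ⟨x1, hx1, hx4, hvx, hin, hux⟩ := inner_region hχ hκ hε hκε (by linarith) S
  have hb2 : (ε ^ (-(1 / 2) : ℝ)) ^ 2 = ε⁻¹ := by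
    rw [← Real.rpow_natCast, ← Real.rpow_mul hε.le]
    norm_num [Real.rpow_neg_one]
  have hbp : 0 < ε ^ (-(1 / 2) : ℝ) := by positivity
  have hb1 : ε * (ε ^ (-(1 / 2) : ℝ)) ^ 2 ≤ 1 := by
    rw [hb2, mul_inv_cancel₀ hε.ne']
  have hmid := fun t => middle_region (b := ε ^ (-(1 / 2) : ℝ)) hχ hκ hε hκε S hx1 hvx hb1 t
  have hab : a ≤ ε ^ (-(1 / 2) : ℝ) := by
    refine (pow_le_pow_iff_left₀ ha0.le hbp.le two_ne_zero).1 ?_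
    rw [hb2, le_inv_comm₀ (by positivity) hε, ← one_div, le_div_iff₀ (by positivity)]
    linarith
  have haT : a ≤ T := by linarith
  have hT0 : 0 < T := by linarith
  have hpa := @hh_pos χ ε a ha0
  have hha2 : hh χ ε a ≤ 2 := by
    unfold hh
    have k1 : a ^ (-(χ / 2)) ≤ 1 := Real.rpow_le_one_of_one_le_of_nonpos ha1 (by linarith)
    have k2 : Real.exp (ε * a ^ 2 / 2) ≤ 2 := by
      have q : Real.exp (ε * a ^ 2 / 2) ≤ Real.exp (1 / 2) := Real.exp_le_exp.2 (by linarith)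
      have q2 : Real.exp (1 / 2) ^ 2 = Real.exp 1 := by
        rw [← Real.exp_nat_mul]; norm_num
      have q3 := Real.exp_one_lt_d9
      exact q.trans (le_of_sq_aux (by linarith))
    calc _ ≤ 1 * 2 := mul_le_mul k1 k2 (Real.exp_pos _).le (by norm_num)
      _ = 2 := by norm_num
  have hham : 1 ≤ m * hh χ ε a := by
    unfold hh
    rw [← mul_assoc, hm, ← Real.rpow_add ha0, add_neg_cancel, Real.rpow_zero, one_mul]
    exact Real.one_le_exp (by positivity)
  have hsqrt : Real.sqrt ε = ε ^ (1 / 2 : ℝ) := Real.sqrt_eq_rpow ε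
  have hhT0 := @hh_pos χ ε T hT0
  have htr := transport (a := a) (T := T) hχ hκ hε S ha0
    (by
      unfold rr
      have k1 : χ / (2 * a) ≤ 1 / 4 := by
        rw [div_le_iff₀ (by positivity)]; linarith
      have k2 : 0 ≤ ε * a := by positivity
      exact aux_rr (by linarith) hpa.le hha2)
    (by
      have k0 : rr χ ε T ≤ ε * T := by
        unfold rr
        have : 0 ≤ χ / (2 * T) := by positivity
        linarith
      have k1 : rr χ ε T * hh χ ε T ≤ ε * ε ^ (-(11 / 20) : ℝ) * ε ^ (-(5 / 12) : ℝ) := by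
        calc _ ≤ ε * T * hh χ ε T := by gcongr
          _ ≤ _ := by gcongr
      have k2 : ε * ε ^ (-(11 / 20) : ℝ) * ε ^ (-(5 / 12) : ℝ) = ε ^ (1 / 30 : ℝ) := by
        nth_rewrite 1 [← Real.rpow_one ε]
        rw [← Real.rpow_add hε, ← Real.rpow_add hε]; norm_num
      have := (hsm (1 / 30) le_rfl).2
      linarith)
    (by
      rw [hsqrt]
      have := (hsm (1 / 2) (by norm_num)).1
      have h0 : 0 < κ * ε ^ (1 / 2 : ℝ) := by positivity
      exact (mul_le_mul this hha2 hpa.le (by norm_num)).trans (by norm_num))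
    (by
      rw [hsqrt]
      have := (hsm (1 / 12) (by norm_num)).1
      have e : κ * ε ^ (1 / 2 : ℝ) * ε ^ (-(5 / 12) : ℝ) = κ * ε ^ (1 / 12 : ℝ) := by
        rw [mul_assoc, ← Real.rpow_add hε]; norm_num
      have : κ * ε ^ (1 / 2 : ℝ) * hh χ ε T ≤ κ * ε ^ (1 / 2 : ℝ) * ε ^ (-(5 / 12) : ℝ) := by gcongr
      linarith)
    (by
      have : hh χ ε a ^ 2 ≤ 2 ^ 2 := pow_le_pow_left₀ hpa.le hha2 2
      exact (mul_le_mul hκε this (sq_nonneg _) (by norm_num)).trans (by norm_num))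
    (by
      have := (hsm (1 / 6) (by norm_num)).1
      have e : κ * ε * (ε ^ (-(5 / 12) : ℝ)) ^ 2 = κ * ε ^ (1 / 6 : ℝ) := by
        nth_rewrite 1 [← Real.rpow_one ε]
        rw [← Real.rpow_natCast, ← Real.rpow_mul hε.le, mul_assoc, ← Real.rpow_add hε]; norm_num
      have : κ * ε * hh χ ε T ^ 2 ≤ κ * ε * (ε ^ (-(5 / 12) : ℝ)) ^ 2 := by gcongr
      linarith)
  have hux8 : u x1 ≤ 8 := by have := (hin x1 (by linarith) le_rfl).2; linarith
  have hux0 : 0 ≤ u x1 := by linarith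
  obtain ⟨m1, m2, m3⟩ := hmid a (by linarith) hab
  have hexp2 : Real.exp (2 * (ε * a ^ 2)) ≤ Real.exp 2 := Real.exp_le_exp.2 (by linarith)
  have Fa_up : F0 χ ε u v a ≤ 128 * Real.exp 2 * m := by
    have q1 : Real.exp (2 * (ε * a ^ 2)) * u x1 ^ 2 ≤ Real.exp 2 * 64 := by
      have : u x1 ^ 2 ≤ 64 := (pow_le_pow_left₀ hux0 hux8 2).trans (by norm_num)
      gcongr
    have q2 : v a ^ 2 / (wt χ ε a - κ * ε) ≤ Real.exp 2 * 64 := by linarith [sq_nonneg (u a)]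
    have q3 : u a ^ 2 ≤ Real.exp 2 * 64 := by
      have : 0 ≤ v a ^ 2 / (wt χ ε a - κ * ε) := by positivity
      linarith
    rw [div_le_iff₀ m3] at q2
    have q4 : v a ^ 2 ≤ Real.exp 2 * 64 * wt χ ε a := by
      refine q2.trans ?_
      have : 0 < κ * ε := by positivity
      gcongr; linarith
    rw [wt_eq_hh ha0] at q4
    have q5 : 1 / hh χ ε a ≤ m := by
      rw [div_le_iff₀ hpa]; exact hham
    unfold F0
    calc hh χ ε a * v a ^ 2 + u a ^ 2 / hh χ ε a
        ≤ hh χ ε a * (Real.exp 2 * 64 * (1 / hh χ ε a ^ 2)) + Real.exp 2 * 64 / hh χ ε a := by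
          gcongr
      _ = 128 * Real.exp 2 * (1 / hh χ ε a) := by field_simp; ring
      _ ≤ _ := by gcongr
  have Fa_lo : 1 ≤ 9 * Real.exp 2 * m * F0 χ ε u v a := by
    have q0 : 3 / 4 ≤ wt χ ε x1 := by
      have := @wt_ge χ ε x1 hχ hx1
      have j1 : x1 ^ 2 ≤ 4 ^ 2 := pow_le_pow_left₀ (by linarith) hx4 2
      have j2 : ε * x1 ^ 2 ≤ (1 / 64) * 4 ^ 2 := mul_le_mul (by linarith) j1 (sq_nonneg _) (by norm_num)
      linarith
    have q1 : 1 / 9 ≤ (wt χ ε x1 - κ * ε) * u x1 ^ 2 := by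
      have : (2 / 3) ^ 2 ≤ u x1 ^ 2 := pow_le_pow_left₀ (by norm_num) hux 2
      refine le_trans (by norm_num) (mul_le_mul (show 1 / 4 ≤ wt χ ε x1 - κ * ε by linarith) this
        (by norm_num) (by linarith))
    have q2 : v a ^ 2 + (wt χ ε a - κ * ε) * u a ^ 2 ≤ v a ^ 2 + wt χ ε a * u a ^ 2 := by
      have : 0 ≤ κ * ε * u a ^ 2 := by positivity
      linarith
    have q3 : F0 χ ε u v a = hh χ ε a * (v a ^ 2 + wt χ ε a * u a ^ 2) := by
      rw [wt_eq_hh ha0]; unfold F0; field_simp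
    have q4 : 1 / 9 ≤ Real.exp 2 * (v a ^ 2 + wt χ ε a * u a ^ 2) := by
      have w0 := @wt_nonneg χ ε a ha0.le
      calc _ ≤ _ := q1.trans m2
        _ ≤ Real.exp (2 * (ε * a ^ 2)) * (v a ^ 2 + wt χ ε a * u a ^ 2) := by gcongr
        _ ≤ _ := by gcongr
    rw [q3]
    calc (1 : ℝ) ≤ (m * hh χ ε a) * (9 * (Real.exp 2 * (v a ^ 2 + wt χ ε a * u a ^ 2))) := by
          apply one_le_mul_of_one_le_of_one_le hham; linarith
      _ = _ := by ring
  refine ⟨x1, T, hx1, hx4, hvx, hin, hux, ?_, hab, T1, T2, T3, ?_, T5, ?_, ?_⟩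
  · intro t h1 h2
    obtain ⟨n1, n2, n3⟩ := hmid t h1 h2
    have t0 : 0 ≤ t := by linarith
    have hy : ε * t ^ 2 ≤ 1 := le_trans (by gcongr) hb1
    have hy0 : 0 ≤ ε * t ^ 2 := by positivity
    have e1 : Real.exp (ε * t ^ 2) ≤ 1 + 2 * (ε * t ^ 2) := by
      have := Real.abs_exp_sub_one_le (x := ε * t ^ 2) (by rw [abs_of_nonneg hy0]; exact hy)
      rw [abs_of_nonneg hy0] at this
      linarith [le_abs_self (Real.exp (ε * t ^ 2) - 1)]
    have e2 : u t ^ 2 ≤ (u x1 * Real.exp (ε * t ^ 2)) ^ 2 := by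
      have : 0 ≤ v t ^ 2 / (wt χ ε t - κ * ε) := by positivity
      have e : Real.exp (2 * (ε * t ^ 2)) = Real.exp (ε * t ^ 2) ^ 2 := by
        rw [← Real.exp_nat_mul]; norm_num
      rw [e] at n1
      rw [mul_pow]
      linarith
    have e3 := abs_le_of_sq_le_sq e2 (by positivity)
    calc |u t| ≤ u x1 * Real.exp (ε * t ^ 2) := e3
      _ ≤ _ := by gcongr
  · intro t h1 h2
    refine (hh_le_max hχ hε ha0 h1 h2).trans (max_le (hha2.trans ?_) T4)
    rw [Real.rpow_neg hε.le, ← one_div, le_div_iff₀ (by positivity)]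
    exact hs4
  · intro t h1 h2
    refine (htr t h1 h2).1.trans ?_
    calc 3 * Real.exp 2 * F0 χ ε u v a ≤ 3 * Real.exp 2 * (128 * Real.exp 2 * m) := by gcongr
      _ = _ := by ring
  · intro t h1 h2
    have f := @F0_nonneg χ ε t u v (by linarith)
    calc (1 : ℝ) ≤ _ := Fa_lo
      _ ≤ 9 * Real.exp 2 * m * (3 * Real.exp 2 * F0 χ ε u v t) := by
        gcongr; exact (htr t h1 h2).2
      _ = 27 * (Real.exp 2 * Real.exp 2 * m * F0 χ ε u v t) := by ring
      _ ≤ 384 * (Real.exp 2 * Real.exp 2 * m * F0 χ ε u v t) := by gcongr; norm_num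
      _ = _ := by ring

theorem int_le_deriv {f f' g : ℝ → ℝ} {a b : ℝ} (hab : a ≤ b)
    (hf : ∀ x ∈ Set.Icc a b, HasDerivAt f (f' x) x) (hg : IntegrableOn g (Set.Icc a b))
    (h : ∀ x ∈ Set.Ioo a b, g x ≤ f' x) : ∫ x in a..b, g x ≤ f b - f a :=
  intervalIntegral.integral_le_sub_of_hasDeriv_right_of_le hab
    (fun x hx => (hf x hx).continuousAt.continuousWithinAt)
    (fun x hx => (hf x (Set.Ioo_subset_Icc_self hx)).hasDerivWithinAt) hg h

theorem deriv_le_int {f f' g : ℝ → ℝ} {a b : ℝ} (hab : a ≤ b)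
    (hf : ∀ x ∈ Set.Icc a b, HasDerivAt f (f' x) x) (hg : IntegrableOn g (Set.Icc a b))
    (h : ∀ x ∈ Set.Ioo a b, f' x ≤ g x) : f b - f a ≤ ∫ x in a..b, g x :=
  intervalIntegral.sub_le_integral_of_hasDeriv_right_of_le hab
    (fun x hx => (hf x hx).continuousAt.continuousWithinAt)
    (fun x hx => (hf x (Set.Ioo_subset_Icc_self hx)).hasDerivWithinAt) hg h

theorem int_Ioi_le {g η : ℝ → ℝ} {T M : ℝ} (hg : IntegrableOn g (Set.Ioi T))
    (hη : Filter.Tendsto η Filter.atTop (nhds 0))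
    (h : ∀ X, T ≤ X → ∫ x in T..X, g x ≤ M + η X) : ∫ x in Set.Ioi T, g x ≤ M := by
  have h1 := intervalIntegral_tendsto_integral_Ioi T hg Filter.tendsto_id
  have h2 : Filter.Tendsto (fun X => M + η X) Filter.atTop (nhds (M + 0)) := hη.const_add M
  rw [add_zero] at h2
  refine le_of_tendsto_of_tendsto h1 h2 ?_
  filter_upwards [Filter.eventually_ge_atTop T] with X hX using h X hX

theorem Sol.cont_u {χ κ ε : ℝ} {u v : ℝ → ℝ} (S : Sol χ κ ε u v) : ContinuousOn u (Set.Ici 0) :=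
  fun t ht => (S.hu t ht).continuousAt.continuousWithinAt

theorem wt_cont {χ ε : ℝ} (hχ : 0 ≤ χ) : Continuous (wt χ ε) := by
  unfold wt
  have : Continuous fun t : ℝ => t ^ χ := Real.continuous_rpow_const hχ
  fun_prop

theorem rpow_wt_int {χ ε r : ℝ} (hε : 0 < ε) (hr : -1 < r + χ) :
    IntegrableOn (fun t => t ^ r * wt χ ε t) (Set.Ioi 0) := by
  refine (integrableOn_rpow_mul_exp_neg_mul_sq hε hr).congr_fun ?_ measurableSet_Ioi
  intro t ht
  have ht : 0 < t := ht
  simp only [wt]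
  rw [Real.rpow_add ht, neg_mul]; ring

theorem wt_int {χ ε : ℝ} (hχ : 0 ≤ χ) (hε : 0 < ε) : IntegrableOn (wt χ ε) (Set.Ioi 0) := by
  have := rpow_wt_int (r := 0) (χ := χ) hε (by linarith)
  simpa using this

theorem wtu_int {χ κ ε r : ℝ} {u v : ℝ → ℝ} (hε : 0 < ε) (hr : -1 < r + χ) (S : Sol χ κ ε u v) :
    IntegrableOn (fun t => t ^ r * wt χ ε t * u t) (Set.Ioi 0) := by
  obtain ⟨B, hB⟩ := S.bdd
  refine (rpow_wt_int hε hr).mul_bdd (c := B) ?_ ?_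
  · exact (S.cont_u.mono Set.Ioi_subset_Ici_self).aestronglyMeasurable measurableSet_Ioi
  · exact Filter.Eventually.of_forall fun t => by simpa using hB t

theorem wtu2_int {χ κ ε : ℝ} {u v : ℝ → ℝ} (hχ : 0 ≤ χ) (hε : 0 < ε) (S : Sol χ κ ε u v) :
    IntegrableOn (fun t => wt χ ε t * u t ^ 2) (Set.Ioi 0) := by
  obtain ⟨B, hB⟩ := S.bdd
  refine (wt_int hχ hε).mul_bdd (c := B ^ 2) ?_ ?_
  · exact ((S.cont_u.mono Set.Ioi_subset_Ici_self).pow 2).aestronglyMeasurable measurableSet_Ioi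
  · exact Filter.Eventually.of_forall fun t => by
      rw [Real.norm_eq_abs, abs_pow]
      exact pow_le_pow_left₀ (abs_nonneg _) (hB t) 2

theorem Icc_sub_Ioi {a b : ℝ} (ha : 0 < a) : Set.Icc a b ⊆ Set.Ioi 0 := fun _ hx =>
  lt_of_lt_of_le ha hx.1

theorem tail_rate {χ ε T t : ℝ} (hε : 0 < ε) (hT : 0 < T) (hc : χ ≤ ε * T ^ 2)
    (ht : T ≤ t) : ε * T ≤ 2 * ε * t - χ / t := by
  have t0 : 0 < t := by linarith
  have h1 : χ / t ≤ ε * t := by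
    rw [div_le_iff₀ t0]
    refine hc.trans ?_
    have : T ^ 2 ≤ t ^ 2 := by gcongr
    nlinarith
  nlinarith

theorem tail_w {χ ε T : ℝ} (hχ : 0 ≤ χ) (hε : 0 < ε) (hT : 0 < T) (hc : χ ≤ ε * T ^ 2) :
    ∫ t in Set.Ioi T, wt χ ε t ≤ wt χ ε T / (ε * T) := by
  have hεT : 0 < ε * T := by positivity
  refine int_Ioi_le (η := fun _ => 0) ((wt_int hχ hε).mono_set (Set.Ioi_subset_Ioi hT.le))
    tendsto_const_nhds ?_
  intro X hX
  have := int_le_deriv (f := fun t => -(wt χ ε t / (ε * T))) (g := wt χ ε) hX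
    (fun x hx => ((wt_hasDeriv (by linarith [hx.1])).div_const _).neg)
    ((wt_int hχ hε).mono_set (Icc_sub_Ioi hT)) (fun x hx => by
      have x0 : 0 < x := hT.trans hx.1
      have h1 := tail_rate hε hT hc hx.1.le
      have h2 := @wt_nonneg χ ε x x0.le
      rw [← neg_div, le_div_iff₀ hεT]
      nlinarith)
  have h3 : 0 ≤ wt χ ε X / (ε * T) := div_nonneg (wt_nonneg (by linarith)) hεT.le
  linarith

theorem tail_wu2 {χ κ ε T : ℝ} {u v : ℝ → ℝ} (hχ : 0 ≤ χ) (hκ : 0 < κ) (hε : 0 < ε)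
    (S : Sol χ κ ε u v) (hT : 0 < T) (hc : χ ≤ ε * T ^ 2) :
    ∫ t in Set.Ioi T, wt χ ε t * u t ^ 2 ≤ F0 χ ε u v T / hh χ ε T / (ε * T) := by
  have hεT : 0 < ε * T := by positivity
  have hκε : 0 < κ * ε := by positivity
  refine int_Ioi_le (η := fun X => κ * ε / (ε * T) * u X ^ 2)
    ((wtu2_int hχ hε S).mono_set (Set.Ioi_subset_Ioi hT.le)) ?_ ?_
  · have := (S.lim.pow 2).const_mul (κ * ε / (ε * T))
    simpa using this
  intro X hX
  have X0 : 0 < X := by linarith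
  have := int_le_deriv (f := fun t => -((v t ^ 2 + (wt χ ε t - κ * ε) * u t ^ 2) / (ε * T)))
    (f' := fun t => -((χ / t - 2 * ε * t) * wt χ ε t * u t ^ 2 / (ε * T)))
    (g := fun t => wt χ ε t * u t ^ 2) hX
    (fun x hx => by
      have x0 : 0 < x := by linarith [hx.1]
      have d := (((S.hv x x0.le).pow 2).add
        (((wt_hasDeriv (χ := χ) (ε := ε) x0).sub_const (κ * ε)).mul ((S.hu x x0.le).pow 2)))
      refine ((d.div_const (ε * T)).neg).congr_deriv ?_
      simp only [Pi.pow_apply]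
      push_cast; ring)
    ((wtu2_int hχ hε S).mono_set (Icc_sub_Ioi hT)) (fun x hx => by
      have x0 : 0 < x := hT.trans hx.1
      have h1 := tail_rate hε hT hc hx.1.le
      have h2 := mul_nonneg (@wt_nonneg χ ε x x0.le) (sq_nonneg (u x))
      rw [← neg_div, le_div_iff₀ hεT]
      nlinarith)
  have hF : F0 χ ε u v T / hh χ ε T = v T ^ 2 + wt χ ε T * u T ^ 2 := by
    have := (@hh_pos χ ε T hT).ne'
    rw [wt_eq_hh hT]; unfold F0; field_simp
  rw [hF]
  refine this.trans ?_
  have h3 : 0 ≤ wt χ ε X * u X ^ 2 := mul_nonneg (wt_nonneg X0.le) (sq_nonneg _)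
  have h4 : 0 ≤ κ * ε * u T ^ 2 := by positivity
  have h5 : 0 ≤ v X ^ 2 := sq_nonneg _
  rw [div_mul_eq_mul_div, ← add_div, neg_sub_neg, ← sub_div]
  exact (div_le_div_iff_of_pos_right hεT).2 (by linarith)

theorem Good.u_le {χ κ ε C1 x1 T : ℝ} {u v : ℝ → ℝ} (hε : 0 < ε)
    (G : Good χ κ ε C1 u v x1 T) {t : ℝ} (h0 : 0 ≤ t) (h1 : t ≤ ε ^ (-(1 / 2) : ℝ)) :
    |u t| ≤ 24 := by
  have k := G.x1_le
  have k1 := G.x1_ge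
  have k2 := G.inner x1 (by linarith) le_rfl
  rcases le_total t x1 with h | h
  · have := G.inner t h0 h
    rw [abs_of_nonneg this.1]; linarith
  · refine (G.mid t h h1).trans ?_
    have hb2 : (ε ^ (-(1 / 2) : ℝ)) ^ 2 = ε⁻¹ := by
      rw [← Real.rpow_natCast, ← Real.rpow_mul hε.le]
      norm_num [Real.rpow_neg_one]
    have h3 : ε * t ^ 2 ≤ 1 := by
      calc ε * t ^ 2 ≤ ε * (ε ^ (-(1 / 2) : ℝ)) ^ 2 := by gcongr
        _ = 1 := by rw [hb2, mul_inv_cancel₀ hε.ne']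
    calc u x1 * (1 + 2 * (ε * t ^ 2)) ≤ 8 * 3 := by
          apply mul_le_mul <;> first | linarith | positivity
      _ = 24 := by norm_num

theorem one_div_hh {χ ε t : ℝ} (ht : 0 < t) :
    1 / hh χ ε t = t ^ (χ / 2) * Real.exp (-(ε / 2) * t ^ (2 : ℝ)) := by
  unfold hh
  rw [Real.rpow_neg ht.le, Real.rpow_two, one_div, mul_inv, inv_inv, ← Real.exp_neg]
  congr 2; ring

theorem N_lower {χ κ ε C1 x1 T : ℝ} {u v : ℝ → ℝ} (hχ : 0 ≤ χ) (hκ : 0 < κ) (hε : 0 < ε)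
    (hC1 : 1 ≤ C1) (S : Sol χ κ ε u v) (G : Good χ κ ε C1 u v x1 T) :
    ε ^ (-((χ + 2) / 4)) * Real.exp (-2) / C1 - C1 ≤
      2 * ∫ t in Set.Ioi 0, wt χ ε t * u t ^ 2 := by
  set b : ℝ := ε ^ (-(1 / 2) : ℝ) with hb
  have hbp : 0 < b := by positivity
  have hb2 : b ^ 2 = ε⁻¹ := by
    rw [hb, ← Real.rpow_natCast, ← Real.rpow_mul hε.le]
    norm_num [Real.rpow_neg_one]
  have hκε : 0 < κ * ε := by positivity
  have hab := G.a_le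
  have hT := G.T_ge
  have hIntg := wtu2_int hχ hε S
  set m : ℝ := b ^ (χ / 2) * Real.exp (-2) / C1 with hm
  have key := deriv_le_int (f := fun t => m * t - u t * v t)
    (f' := fun t => m * 1 - (v t * v t + u t * (-(wt χ ε t - κ * ε) * u t)))
    (g := fun t => 2 * (wt χ ε t * u t ^ 2)) (show b ≤ 2 * b by linarith)
    (fun x hx => by
      have x0 : 0 ≤ x := by linarith [hx.1]
      exact ((hasDerivAt_id x).const_mul m).sub ((S.hu x x0).mul (S.hv x x0)))
    ((hIntg.mono_set (Icc_sub_Ioi hbp)).const_mul 2) (fun x hx => by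
      have x0 : 0 < x := hbp.trans hx.1
      have hF := G.F_ge x (by linarith [hx.1]) (by linarith [hx.2])
      have hp := @hh_pos χ ε x x0
      have e1 : F0 χ ε u v x / hh χ ε x = v x ^ 2 + wt χ ε x * u x ^ 2 := by
        have := hp.ne'
        rw [wt_eq_hh x0]; unfold F0; field_simp
      have e2 : m ≤ F0 χ ε u v x / hh χ ε x := by
        have q1 : b ^ (χ / 2) * Real.exp (-2) ≤ 1 / hh χ ε x := by
          rw [one_div_hh x0, Real.rpow_two]
          have y1 : b ^ (χ / 2) ≤ x ^ (χ / 2) :=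
            Real.rpow_le_rpow hbp.le hx.1.le (by linarith)
          have y2 : Real.exp (-2) ≤ Real.exp (-(ε / 2) * x ^ 2) := by
            apply Real.exp_le_exp.2
            have : x ^ 2 ≤ (2 * b) ^ 2 := pow_le_pow_left₀ x0.le hx.2.le 2
            have z : ε * x ^ 2 ≤ ε * (2 * b) ^ 2 := by gcongr
            have z2 : ε * (2 * b) ^ 2 = 4 := by
              rw [mul_pow, hb2]; field_simp; norm_num
            linarith
          exact mul_le_mul y1 y2 (Real.exp_pos _).le (by positivity)
        have q2 : 1 / C1 ≤ F0 χ ε u v x := by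
          rw [div_le_iff₀ (by linarith)]; linarith
        calc m = (1 / C1) * (b ^ (χ / 2) * Real.exp (-2)) := by rw [hm]; ring
          _ ≤ F0 χ ε u v x * (1 / hh χ ε x) := mul_le_mul q2 q1 (by positivity)
              (F0_nonneg x0)
          _ = _ := by ring
      rw [e1] at e2
      have z : 0 ≤ κ * ε * u x ^ 2 := by positivity
      linarith)
  have huv : ∀ t, b ≤ t → t ≤ 2 * b → |u t * v t| ≤ C1 / 2 := by
    intro t h1 h2
    have t0 : 0 < t := by linarith
    have := @F0_uv χ ε t u v t0
    have := G.F_le t (by linarith) (by linarith)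
    linarith
  have k1 := (abs_le.1 (huv b le_rfl (by linarith))).1
  have k2 := (abs_le.1 (huv (2 * b) (by linarith) le_rfl)).2
  have hle : ∫ t in b..(2 * b), 2 * (wt χ ε t * u t ^ 2) ≤
      2 * ∫ t in Set.Ioi 0, wt χ ε t * u t ^ 2 := by
    rw [intervalIntegral.integral_const_mul, intervalIntegral.integral_of_le (by linarith)]
    gcongr ?_ * ?_
    refine setIntegral_mono_set hIntg ?_ ?_
    · filter_upwards [ae_restrict_mem measurableSet_Ioi] with t ht
      exact mul_nonneg (wt_nonneg (le_of_lt ht)) (sq_nonneg _)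
    · exact Filter.Eventually.of_forall (fun t ht => hbp.trans ht.1)
  have hmb : m * b = ε ^ (-((χ + 2) / 4)) * Real.exp (-2) / C1 := by
    have : b ^ (χ / 2) * b = ε ^ (-((χ + 2) / 4)) := by
      nth_rewrite 2 [← Real.rpow_one b]
      rw [← Real.rpow_add hbp, hb, ← Real.rpow_mul hε.le]
      congr 1; ring
    rw [← this, hm]; ring
  rw [← hmb]
  linarith

theorem N_upper {χ κ ε C1 x1 T : ℝ} {u v : ℝ → ℝ} (hχ : 0 ≤ χ) (hκ : 0 < κ) (hε : 0 < ε)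
    (hε1 : ε ≤ 1) (hC1 : 1 ≤ C1) (S : Sol χ κ ε u v) (G : Good χ κ ε C1 u v x1 T) :
    ∫ t in Set.Ioi 0, wt χ ε t * u t ^ 2 ≤ 576 * (2 * χ + 4) ^ χ * (2 * χ + 4) +
      C1 * ((ε / 2) ^ (-(χ / 2 + 1) / 2) * (1 / 2) * Real.Gamma ((χ / 2 + 1) / 2)) +
      C1 * ε ^ (-(1 / 10) : ℝ) := by
  set a : ℝ := 2 * χ + 4 with ha
  have ha0 : 0 < a := by linarith
  have hbp : 0 < ε ^ (-(1 / 2) : ℝ) := by positivity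
  have hab := G.a_le
  have hT := G.T_ge
  have haT : a ≤ T := by linarith
  have hT0 : 0 < T := by linarith
  have hIntg := wtu2_int hχ hε S
  have hgi := integrableOn_rpow_mul_exp_neg_mul_rpow (p := 2) (s := χ / 2) (b := ε / 2) (by linarith) (by norm_num) (by positivity)
  have hge := integral_rpow_mul_exp_neg_mul_rpow (p := 2) (q := χ / 2) (b := ε / 2)
    (by norm_num) (by linarith) (by positivity)
  have s1 : ∫ t in Set.Ioi 0, wt χ ε t * u t ^ 2 =
      (∫ t in Set.Ioc 0 a, wt χ ε t * u t ^ 2) + (∫ t in Set.Ioc a T, wt χ ε t * u t ^ 2) +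
      ∫ t in Set.Ioi T, wt χ ε t * u t ^ 2 := by
    rw [← Set.Ioc_union_Ioi_eq_Ioi ha0.le, setIntegral_union Set.Ioc_disjoint_Ioi_same
      measurableSet_Ioi (hIntg.mono_set Set.Ioc_subset_Ioi_self)
      (hIntg.mono_set (Set.Ioi_subset_Ioi ha0.le)), ← Set.Ioc_union_Ioi_eq_Ioi haT,
      setIntegral_union Set.Ioc_disjoint_Ioi_same
      measurableSet_Ioi (hIntg.mono_set fun t ht => ha0.trans ht.1)
      (hIntg.mono_set (Set.Ioi_subset_Ioi hT0.le))]
    ring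
  rw [s1]
  have p1 : ∫ t in Set.Ioc 0 a, wt χ ε t * u t ^ 2 ≤ 576 * a ^ χ * a := by
    calc _ ≤ ∫ t in Set.Ioc 0 a, 576 * a ^ χ := by
          refine setIntegral_mono_on (hIntg.mono_set Set.Ioc_subset_Ioi_self) continuous_const.integrableOn_Ioc measurableSet_Ioc ?_
          intro t ht
          have h1 := (@wt_le_rpow χ ε t hε.le ht.1.le).trans
            (Real.rpow_le_rpow ht.1.le ht.2 hχ)
          have h2 : u t ^ 2 ≤ 24 ^ 2 := by
            rw [← sq_abs]
            exact pow_le_pow_left₀ (abs_nonneg _) (G.u_le hε ht.1.le (ht.2.trans hab)) 2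
          calc wt χ ε t * u t ^ 2 ≤ a ^ χ * 24 ^ 2 :=
                mul_le_mul h1 h2 (sq_nonneg _) (by positivity)
            _ = _ := by ring
      _ = _ := by simp [ha0.le]; ring
  have p2 : ∫ t in Set.Ioc a T, wt χ ε t * u t ^ 2 ≤
      C1 * ((ε / 2) ^ (-(χ / 2 + 1) / 2) * (1 / 2) * Real.Gamma ((χ / 2 + 1) / 2)) := by
    rw [← hge, ← integral_const_mul]
    calc _ ≤ ∫ t in Set.Ioc a T, C1 * (t ^ (χ / 2) * Real.exp (-(ε / 2) * t ^ (2 : ℝ))) := by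
          refine setIntegral_mono_on (hIntg.mono_set fun t ht => ha0.trans ht.1)
            ((hgi.mono_set fun t ht => ha0.trans ht.1).const_mul C1) measurableSet_Ioc ?_
          intro t ht
          have t0 : 0 < t := ha0.trans ht.1
          have hp := @hh_pos χ ε t t0
          have h1 := @F0_u χ ε t u v t0
          have h2 := G.F_le t ht.1.le ht.2
          rw [← one_div_hh t0, wt_eq_hh t0]
          calc 1 / hh χ ε t ^ 2 * u t ^ 2 ≤ 1 / hh χ ε t ^ 2 * (hh χ ε t * C1) := by
                gcongr; exact h1.trans (by gcongr)
            _ = _ := by field_simp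
      _ ≤ _ := by
          refine setIntegral_mono_set (hgi.const_mul C1) ?_ ?_
          · filter_upwards [ae_restrict_mem measurableSet_Ioi] with t ht
            have ht : 0 < t := ht
            simp only [Pi.zero_apply]
            positivity
          · exact Filter.Eventually.of_forall (fun t ht => ha0.trans ht.1)
  have p3 : ∫ t in Set.Ioi T, wt χ ε t * u t ^ 2 ≤ C1 * ε ^ (-(1 / 10) : ℝ) := by
    refine (tail_wu2 hχ hκ hε S hT0 G.chi_le).trans ?_
    have hp := @hh_pos χ ε T hT0
    have q1 : 1 / hh χ ε T ≤ ε ^ (2 / 5 : ℝ) := by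
      rw [div_le_comm₀ hp (by positivity)]
      have := G.hT_ge
      rwa [Real.rpow_neg hε.le, ← one_div] at this
    have q2 : 1 / (ε * T) ≤ ε ^ (-(1 / 2) : ℝ) := by
      rw [div_le_iff₀ (by positivity)]
      have : ε ^ (-(1 / 2) : ℝ) * ε * ε ^ (-(1 / 2) : ℝ) = 1 := by
        nth_rewrite 2 [← Real.rpow_one ε]
        rw [← Real.rpow_add hε, ← Real.rpow_add hε]; norm_num
      calc (1 : ℝ) = ε ^ (-(1 / 2) : ℝ) * ε * ε ^ (-(1 / 2) : ℝ) := this.symm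
        _ ≤ ε ^ (-(1 / 2) : ℝ) * ε * T := by gcongr; linarith
        _ = _ := by ring
    calc F0 χ ε u v T / hh χ ε T / (ε * T) = F0 χ ε u v T * ((1 / hh χ ε T) * (1 / (ε * T))) := by
          ring
      _ ≤ C1 * (ε ^ (2 / 5 : ℝ) * ε ^ (-(1 / 2) : ℝ)) := by
          gcongr
          exact G.F_le T haT le_rfl
      _ = _ := by rw [← Real.rpow_add hε]; norm_num
  linarith

noncomputable def PP (ξ : ℝ) (u v : ℝ → ℝ) (t : ℝ) : ℝ :=
  -(t ^ (-ξ) * v t) - ξ * (t ^ (-ξ - 1) * u t)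

theorem PP_deriv {χ κ ε ξ t : ℝ} {u v : ℝ → ℝ} (S : Sol χ κ ε u v) (ht : 0 < t) :
    HasDerivAt (PP ξ u v) (t ^ (-ξ) * wt χ ε t * u t - κ * ε * (t ^ (-ξ) * u t) +
      ξ * (ξ + 1) * (t ^ (-ξ - 2) * u t)) t := by
  have d1 : HasDerivAt (fun t : ℝ => t ^ (-ξ)) ((-ξ) * t ^ (-ξ - 1)) t :=
    Real.hasDerivAt_rpow_const (Or.inl ht.ne')
  have d2 : HasDerivAt (fun t : ℝ => t ^ (-ξ - 1)) ((-ξ - 1) * t ^ (-ξ - 1 - 1)) t :=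
    Real.hasDerivAt_rpow_const (Or.inl ht.ne')
  have d := ((d1.mul (S.hv t ht.le)).neg).sub ((d2.mul (S.hu t ht.le)).const_mul ξ)
  refine d.congr_deriv ?_
  have e : t ^ (-ξ - 2) = t ^ (-ξ - 1 - 1) := by congr 1; ring
  rw [e]; ring

theorem I_inner {χ κ ε C1 x1 T ξ : ℝ} {u v : ℝ → ℝ} (hκ : 0 < κ) (hε : 0 < ε)
    (hξ0 : 0 ≤ ξ) (hξ : ξ < (χ + 1) / 2) (hχ : 0 ≤ χ)
    (S : Sol χ κ ε u v) (G : Good χ κ ε C1 u v x1 T) :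
    (4 : ℝ) ^ (-ξ) ≤ ∫ t in (0 : ℝ)..x1, t ^ (-ξ) * wt χ ε t * u t ∧
      ∫ t in (0 : ℝ)..x1, t ^ (-ξ) * wt χ ε t * u t ≤ 8 * (4 : ℝ) ^ (χ + 1 - ξ) := by
  have hIntg := wtu_int (r := -ξ) hε (by linarith) S
  have hx1 := G.x1_ge
  have hx4 := G.x1_le
  have hI : IntegrableOn (fun t => t ^ (-ξ) * wt χ ε t * u t) (Set.Icc 0 x1) := by
    rw [integrableOn_Icc_iff_integrableOn_Ioc]
    exact hIntg.mono_set Set.Ioc_subset_Ioi_self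
  constructor
  · have := deriv_le_int (f := fun t => -((4 : ℝ) ^ (-ξ) * v t))
      (f' := fun t => -((4 : ℝ) ^ (-ξ) * (-(wt χ ε t - κ * ε) * u t)))
      (show 0 ≤ x1 by linarith)
      (fun x hx => ((S.hv x hx.1).const_mul _).neg) hI (fun x hx => by
        have hu := (G.inner x hx.1.le hx.2.le).1
        have hw := @wt_nonneg χ ε x hx.1.le
        have h4 : (4 : ℝ) ^ (-ξ) ≤ x ^ (-ξ) :=
          Real.rpow_le_rpow_of_nonpos hx.1 (by linarith [hx.2]) (by linarith)
        have h5 : (4 : ℝ) ^ (-ξ) * (wt χ ε x * u x) ≤ x ^ (-ξ) * (wt χ ε x * u x) := by gcongr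
        have h6 : 0 ≤ (4 : ℝ) ^ (-ξ) * (κ * ε * u x) := by positivity
        linarith)
    simp only [G.vx1, S.v0] at this
    linarith
  · have := int_le_deriv (f := fun t => 2 * (4 : ℝ) ^ (χ + 1 - ξ) * t)
      (f' := fun t => 2 * (4 : ℝ) ^ (χ + 1 - ξ) * 1)
      (show 0 ≤ x1 by linarith)
      (fun x hx => (hasDerivAt_id x).const_mul _) hI (fun x hx => by
        have hu := G.inner x hx.1.le hx.2.le
        have hw := @wt_nonneg χ ε x hx.1.le
        have hw2 := @wt_le_rpow χ ε x hε.le hx.1.le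
        have x0 : 0 < x := hx.1
        calc x ^ (-ξ) * wt χ ε x * u x ≤ x ^ (-ξ) * x ^ χ * (2 * x) := by
              gcongr
              · exact hu.1
              · exact hu.2
          _ = 2 * x ^ (χ + 1 - ξ) := by
              have : χ + 1 - ξ = -ξ + χ + 1 := by ring
              rw [this, Real.rpow_add x0, Real.rpow_add x0, Real.rpow_one]; ring
          _ ≤ _ := by
              rw [mul_one]
              gcongr
              · linarith
              · linarith [hx.2])
    refine this.trans ?_
    have h0 : 0 < (4 : ℝ) ^ (χ + 1 - ξ) := by positivity
    have : 2 * (4 : ℝ) ^ (χ + 1 - ξ) * x1 ≤ 2 * (4 : ℝ) ^ (χ + 1 - ξ) * 4 := by gcongr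
    linarith

theorem I_mid1 {χ κ ε C1 x1 T ξ : ℝ} {u v : ℝ → ℝ} (hκ : 0 < κ) (hε : 0 < ε)
    (hξ0 : 0 ≤ ξ) (hξ : ξ < (χ + 1) / 2) (hχ : 0 ≤ χ)
    (S : Sol χ κ ε u v) (G : Good χ κ ε C1 u v x1 T) :
    PP ξ u v (ε ^ (-(1 / 2) : ℝ)) - (24 * κ + 16 * ξ * (ξ + 1)) * ε ^ (1 / 2 : ℝ) ≤
      ∫ t in x1..(ε ^ (-(1 / 2) : ℝ)), t ^ (-ξ) * wt χ ε t * u t ∧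
    ∫ t in x1..(ε ^ (-(1 / 2) : ℝ)), t ^ (-ξ) * wt χ ε t * u t ≤
      PP ξ u v (ε ^ (-(1 / 2) : ℝ)) + (24 * κ + 16 * ξ * (ξ + 1)) * ε ^ (1 / 2 : ℝ) + 16 * ξ := by
  have hεb : ε * ε ^ (-(1 / 2) : ℝ) = ε ^ (1 / 2 : ℝ) := by
    nth_rewrite 1 [← Real.rpow_one ε]
    rw [← Real.rpow_add hε]; norm_num
  rw [← hεb]
  have hu24 := fun t h0 h1 => G.u_le hε (t := t) h0 h1
  have hmid := G.mid
  have hab := G.a_le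
  set b : ℝ := ε ^ (-(1 / 2) : ℝ) with hb
  have hIntg := wtu_int (r := -ξ) hε (by linarith) S
  have hx1 := G.x1_ge
  have hx4 := G.x1_le
  have hxb : x1 ≤ b := by linarith
  have hx0 : 0 < x1 := by linarith
  have hU := G.inner x1 hx0.le le_rfl
  have hI := hIntg.mono_set (Icc_sub_Ioi (b := b) hx0)
  set U := u x1 with hUd
  have hU8 : U ≤ 8 := by linarith
  set K : ℝ := 24 * κ + 16 * ξ * (ξ + 1) with hK
  have dR : ∀ x : ℝ, 0 < x → HasDerivAt (fun t : ℝ => -(U * ξ * t ^ (-ξ - 1)) + K * ε * t)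
      (U * (ξ * (ξ + 1)) * x ^ (-ξ - 2) + K * ε * 1) x := by
    intro x x0
    have d2 : HasDerivAt (fun t : ℝ => t ^ (-ξ - 1)) ((-ξ - 1) * x ^ (-ξ - 1 - 1)) x :=
      Real.hasDerivAt_rpow_const (Or.inl x0.ne')
    refine (((d2.const_mul (U * ξ)).neg).add ((hasDerivAt_id x).const_mul (K * ε))).congr_deriv ?_
    have e : x ^ (-ξ - 2) = x ^ (-ξ - 1 - 1) := by congr 1; ring
    rw [e]; ring
  have hab2 : ∀ x, x1 ≤ x → x ≤ b →
      |-(κ * ε * (x ^ (-ξ) * u x)) + ξ * (ξ + 1) * (x ^ (-ξ - 2) * u x)| ≤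
      U * (ξ * (ξ + 1)) * x ^ (-ξ - 2) + K * ε * 1 := by
    intro x h1 h2
    have x0 : 0 < x := by linarith
    have y1 : x ^ (-ξ) ≤ 1 := Real.rpow_le_one_of_one_le_of_nonpos (by linarith) (by linarith)
    have y2 : x ^ (-ξ - 2) * x ^ 2 = x ^ (-ξ) := by
      rw [← Real.rpow_natCast, ← Real.rpow_add x0]; congr 1; push_cast; ring
    have yp : 0 < x ^ (-ξ - 2) := by positivity
    have yq : 0 < x ^ (-ξ) := by positivity
    have z1 : |κ * ε * (x ^ (-ξ) * u x)| ≤ κ * ε * (1 * 24) := by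
      rw [abs_mul, abs_mul (x ^ (-ξ)), abs_of_pos yq, abs_of_pos (by positivity : 0 < κ * ε)]
      gcongr
      exact hu24 x x0.le h2
    have z2 : |ξ * (ξ + 1) * (x ^ (-ξ - 2) * u x)| ≤
        ξ * (ξ + 1) * (x ^ (-ξ - 2) * (U * (1 + 2 * (ε * x ^ 2)))) := by
      rw [abs_mul, abs_mul (x ^ (-ξ - 2)), abs_of_pos yp,
        abs_of_nonneg (by positivity : 0 ≤ ξ * (ξ + 1))]
      gcongr
      exact hmid x h1 h2
    have z3 : ξ * (ξ + 1) * (x ^ (-ξ - 2) * (U * (1 + 2 * (ε * x ^ 2)))) =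
        U * (ξ * (ξ + 1)) * x ^ (-ξ - 2) + ξ * (ξ + 1) * (2 * ε) * (U * x ^ (-ξ)) := by
      rw [← y2]; ring
    have z4 : ξ * (ξ + 1) * (2 * ε) * (U * x ^ (-ξ)) ≤ ξ * (ξ + 1) * (2 * ε) * (8 * 1) := by
      have := hU.1
      gcongr
    have := abs_add_le (-(κ * ε * (x ^ (-ξ) * u x))) (ξ * (ξ + 1) * (x ^ (-ξ - 2) * u x))
    rw [abs_neg] at this
    rw [hK]
    linarith
  have hb0 : 0 < b := by linarith
  have hbp : 0 ≤ U * ξ * b ^ (-ξ - 1) := by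
    have := hU.1
    positivity
  have hPx : PP ξ u v x1 = -(U * ξ * x1 ^ (-ξ - 1)) := by
    unfold PP
    rw [G.vx1, ← hUd]; ring
  have hKe : 0 ≤ K * ε * x1 := by rw [hK]; positivity
  constructor
  · have := deriv_le_int (f := fun t => PP ξ u v t - (-(U * ξ * t ^ (-ξ - 1)) + K * ε * t)) hxb
      (fun x hx => (PP_deriv S (by linarith [hx.1])).sub (dR x (by linarith [hx.1]))) hI
      (fun x hx => by
        have := abs_le.1 (hab2 x hx.1.le hx.2.le)
        linarith [this.1, this.2])
    simp only [hPx] at this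
    linarith
  · have := int_le_deriv (f := fun t => PP ξ u v t + (-(U * ξ * t ^ (-ξ - 1)) + K * ε * t)) hxb
      (fun x hx => (PP_deriv S (by linarith [hx.1])).add (dR x (by linarith [hx.1]))) hI
      (fun x hx => by
        have := abs_le.1 (hab2 x hx.1.le hx.2.le)
        linarith [this.1, this.2])
    simp only [hPx] at this
    have q1 : x1 ^ (-ξ - 1) ≤ 1 := Real.rpow_le_one_of_one_le_of_nonpos hx1 (by linarith)
    have q2 : U * ξ * x1 ^ (-ξ - 1) ≤ 8 * ξ * 1 := by gcongr
    linarith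

theorem I_mid2 {χ κ ε C1 x1 T ξ : ℝ} {u v : ℝ → ℝ} (hκ : 0 < κ) (hε : 0 < ε) (hε1 : ε ≤ 1)
    (hξ0 : 0 ≤ ξ) (hξ : ξ < (χ + 1) / 2) (hχ : 0 ≤ χ) (hC1 : 1 ≤ C1)
    (S : Sol χ κ ε u v) (G : Good χ κ ε C1 u v x1 T) :
    |(∫ t in (ε ^ (-(1 / 2) : ℝ))..T, t ^ (-ξ) * wt χ ε t * u t) +
      PP ξ u v (ε ^ (-(1 / 2) : ℝ))| ≤ (κ + ξ * (ξ + 1) + ξ + 1) * C1 * ε ^ (1 / 10 : ℝ) := by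
  have hb2 : (ε ^ (-(1 / 2) : ℝ)) ^ 2 = ε⁻¹ := by
    rw [← Real.rpow_natCast, ← Real.rpow_mul hε.le]
    norm_num [Real.rpow_neg_one]
  have hab := G.a_le
  have hTb := G.T_ge
  set b : ℝ := ε ^ (-(1 / 2) : ℝ) with hb
  have hIntg := wtu_int (r := -ξ) hε (by linarith) S
  have hb0 : 0 < b := by linarith
  have hT0 : 0 < T := by linarith
  have hI := hIntg.mono_set (Icc_sub_Ioi (b := T) hb0)
  have hbT : b ≤ T := by linarith
  set M : ℝ := C1 * ε ^ (-(5 / 24) : ℝ) with hM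
  have hM0 : 0 < M := by positivity
  have hu : ∀ x, b ≤ x → x ≤ T → |u x| ≤ M := by
    intro x h1 h2
    have x0 : 0 < x := by linarith
    apply abs_le_of_sq_le_sq ?_ hM0.le
    calc u x ^ 2 ≤ hh χ ε x * F0 χ ε u v x := F0_u x0
      _ ≤ ε ^ (-(5 / 12) : ℝ) * C1 := by
          gcongr
          · exact F0_nonneg x0
          · exact G.hh_le x (by linarith) h2
          · exact G.F_le x (by linarith) h2
      _ ≤ ε ^ (-(5 / 12) : ℝ) * C1 ^ 2 := by
          gcongr; nlinarith
      _ = M ^ 2 := by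
          rw [hM, mul_pow, ← Real.rpow_natCast (ε ^ _), ← Real.rpow_mul hε.le]; norm_num; ring
  set K : ℝ := (κ + ξ * (ξ + 1)) * ε * M with hK
  have hab2 : ∀ x, b ≤ x → x ≤ T →
      |-(κ * ε * (x ^ (-ξ) * u x)) + ξ * (ξ + 1) * (x ^ (-ξ - 2) * u x)| ≤ K * 1 := by
    intro x h1 h2
    have x0 : 0 < x := by linarith
    have y1 : x ^ (-ξ) ≤ 1 := Real.rpow_le_one_of_one_le_of_nonpos (by linarith) (by linarith)
    have yp : 0 < x ^ (-ξ - 2) := by positivity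
    have y2 : x ^ (-ξ - 2) ≤ ε := by
      have e1 : x ^ (-ξ - 2) = x ^ (-ξ) * (x ^ 2)⁻¹ := by
        rw [Real.rpow_sub x0, Real.rpow_two]; ring
      have e2 : (x ^ 2)⁻¹ ≤ ε := by
        rw [inv_le_comm₀ (by positivity) hε, ← hb2]; gcongr
      rw [e1]
      calc _ ≤ 1 * ε := by gcongr
        _ = ε := one_mul _
    have yq : 0 < x ^ (-ξ) := by positivity
    have z1 : |κ * ε * (x ^ (-ξ) * u x)| ≤ κ * ε * (1 * M) := by
      rw [abs_mul, abs_mul (x ^ (-ξ)), abs_of_pos yq, abs_of_pos (by positivity : 0 < κ * ε)]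
      gcongr
      exact hu x h1 h2
    have z2 : |ξ * (ξ + 1) * (x ^ (-ξ - 2) * u x)| ≤ ξ * (ξ + 1) * (ε * M) := by
      rw [abs_mul, abs_mul (x ^ (-ξ - 2)), abs_of_pos yp,
        abs_of_nonneg (by positivity : 0 ≤ ξ * (ξ + 1))]
      gcongr
      exact hu x h1 h2
    have := abs_add_le (-(κ * ε * (x ^ (-ξ) * u x))) (ξ * (ξ + 1) * (x ^ (-ξ - 2) * u x))
    rw [abs_neg] at this
    rw [hK]
    linarith
  have L := deriv_le_int (f := fun t => PP ξ u v t - K * t) hbT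
      (fun x hx => (PP_deriv S (by linarith [hx.1])).sub ((hasDerivAt_id x).const_mul K)) hI
      (fun x hx => by
        have := abs_le.1 (hab2 x hx.1.le hx.2.le)
        linarith [this.1, this.2])
  have R := int_le_deriv (f := fun t => PP ξ u v t + K * t) hbT
      (fun x hx => (PP_deriv S (by linarith [hx.1])).add ((hasDerivAt_id x).const_mul K)) hI
      (fun x hx => by
        have := abs_le.1 (hab2 x hx.1.le hx.2.le)
        linarith [this.1, this.2])
  have pw : ∀ r : ℝ, 1 / 10 ≤ r → ε ^ r ≤ ε ^ (1 / 10 : ℝ) := fun r hr =>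
    Real.rpow_le_rpow_of_exponent_ge hε hε1 hr
  have hKT : K * T ≤ (κ + ξ * (ξ + 1)) * C1 * ε ^ (1 / 10 : ℝ) := by
    calc K * T ≤ K * ε ^ (-(11 / 20) : ℝ) := by
          have : 0 ≤ K := by positivity
          gcongr; exact G.T_le
      _ = (κ + ξ * (ξ + 1)) * C1 * (ε ^ (1 : ℝ) * ε ^ (-(5 / 24) : ℝ) * ε ^ (-(11 / 20) : ℝ)) := by
          rw [hK, hM, Real.rpow_one]; ring
      _ ≤ _ := by
          rw [← Real.rpow_add hε, ← Real.rpow_add hε]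
          exact mul_le_mul_of_nonneg_left (pw _ (by norm_num)) (by positivity)
  have hKb : 0 ≤ K * b := by positivity
  have hv : |v T| ≤ C1 * ε ^ (1 / 10 : ℝ) := by
    have hp := @hh_pos χ ε T hT0
    have q1 : 1 / hh χ ε T ≤ ε ^ (2 / 5 : ℝ) := by
      rw [div_le_comm₀ hp (by positivity)]
      have := G.hT_ge
      rwa [Real.rpow_neg hε.le, ← one_div] at this
    refine le_trans ?_ (mul_le_mul_of_nonneg_left (pw (1 / 5) (by norm_num)) (by linarith : 0 ≤ C1))
    apply abs_le_of_sq_le_sq ?_ (by positivity)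
    have h1 := (@F0_v χ ε T u v hT0).trans (G.F_le T (by linarith) le_rfl)
    calc v T ^ 2 = hh χ ε T * v T ^ 2 * (1 / hh χ ε T) := by field_simp
      _ ≤ C1 * ε ^ (2 / 5 : ℝ) := by gcongr
      _ ≤ C1 ^ 2 * ε ^ (2 / 5 : ℝ) := by gcongr; nlinarith
      _ = _ := by
          rw [mul_pow, ← Real.rpow_natCast (ε ^ _), ← Real.rpow_mul hε.le]; norm_num
  have hPT : |PP ξ u v T| ≤ (ξ + 1) * C1 * ε ^ (1 / 10 : ℝ) := by
    have y1 : T ^ (-ξ) ≤ 1 := Real.rpow_le_one_of_one_le_of_nonpos (by linarith) (by linarith)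
    have y0 : 0 < T ^ (-ξ) := by positivity
    have y2 : T ^ (-ξ - 1) ≤ ε ^ (1 / 2 : ℝ) := by
      have e1 : T ^ (-ξ - 1) = T ^ (-ξ) * T⁻¹ := by
        rw [Real.rpow_sub hT0, Real.rpow_one]; ring
      have e2 : T⁻¹ ≤ ε ^ (1 / 2 : ℝ) := by
        rw [inv_le_comm₀ hT0 (by positivity), ← Real.rpow_neg hε.le]; exact hbT
      rw [e1]
      calc _ ≤ 1 * ε ^ (1 / 2 : ℝ) := by gcongr
        _ = _ := one_mul _
    have y3 : 0 < T ^ (-ξ - 1) := by positivity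
    have z1 : |T ^ (-ξ) * v T| ≤ 1 * (C1 * ε ^ (1 / 10 : ℝ)) := by
      rw [abs_mul, abs_of_pos y0]; gcongr
    have z2 : |ξ * (T ^ (-ξ - 1) * u T)| ≤ ξ * (C1 * ε ^ (1 / 10 : ℝ)) := by
      rw [abs_mul, abs_mul, abs_of_pos y3, abs_of_nonneg hξ0]
      refine mul_le_mul_of_nonneg_left ?_ hξ0
      calc T ^ (-ξ - 1) * |u T| ≤ ε ^ (1 / 2 : ℝ) * M := by gcongr; exact hu T hbT le_rfl
        _ = C1 * (ε ^ (1 / 2 : ℝ) * ε ^ (-(5 / 24) : ℝ)) := by rw [hM]; ring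
        _ ≤ _ := by
          rw [← Real.rpow_add hε]
          exact mul_le_mul_of_nonneg_left (pw _ (by norm_num)) (by positivity)
    unfold PP
    have := abs_sub (-(T ^ (-ξ) * v T)) (ξ * (T ^ (-ξ - 1) * u T))
    rw [abs_neg] at this
    linarith
  have := abs_le.1 hPT
  rw [abs_le]
  constructor <;> linarith [this.1, this.2]

theorem I_tail {χ κ ε C1 x1 T ξ : ℝ} {u v : ℝ → ℝ} (hκ : 0 < κ) (hε : 0 < ε)
    (hξ0 : 0 ≤ ξ) (hξ : ξ < (χ + 1) / 2) (hχ : 0 ≤ χ) (hC1 : 1 ≤ C1)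
    (S : Sol χ κ ε u v) (G : Good χ κ ε C1 u v x1 T) :
    |∫ t in Set.Ioi T, t ^ (-ξ) * wt χ ε t * u t| ≤ C1 * ε ^ (1 / 10 : ℝ) := by
  have hab := G.a_le
  have hTb := G.T_ge
  have hT0 : 0 < T := by linarith
  have hp := @hh_pos χ ε T hT0
  have hIntg := wtu_int (r := -ξ) hε (by linarith) S
  have i1 := (wt_int hχ hε).mono_set (Set.Ioi_subset_Ioi hT0.le)
  have i2 := (wtu2_int hχ hε S).mono_set (Set.Ioi_subset_Ioi hT0.le)
  have t1 := tail_w hχ hε hT0 G.chi_le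
  have t2 := tail_wu2 hχ hκ hε S hT0 G.chi_le
  have q1 : 1 / hh χ ε T ≤ ε ^ (2 / 5 : ℝ) := by
    rw [div_le_comm₀ hp (by positivity)]
    have := G.hT_ge
    rwa [Real.rpow_neg hε.le, ← one_div] at this
  have q2 : 1 / (ε * T) ≤ ε ^ (-(1 / 2) : ℝ) := by
    rw [div_le_iff₀ (by positivity)]
    have : ε ^ (-(1 / 2) : ℝ) * ε * ε ^ (-(1 / 2) : ℝ) = 1 := by
      nth_rewrite 2 [← Real.rpow_one ε]
      rw [← Real.rpow_add hε, ← Real.rpow_add hε]; norm_num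
    calc (1 : ℝ) = ε ^ (-(1 / 2) : ℝ) * ε * ε ^ (-(1 / 2) : ℝ) := this.symm
      _ ≤ ε ^ (-(1 / 2) : ℝ) * ε * T := by gcongr; linarith
      _ = _ := by ring
  have t1' : ∫ t in Set.Ioi T, wt χ ε t ≤ ε ^ (3 / 10 : ℝ) := by
    refine t1.trans ?_
    calc wt χ ε T / (ε * T) = (1 / hh χ ε T) ^ 2 * (1 / (ε * T)) := by
          rw [wt_eq_hh hT0]; ring
      _ ≤ (ε ^ (2 / 5 : ℝ)) ^ 2 * ε ^ (-(1 / 2) : ℝ) := by gcongr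
      _ = _ := by
          rw [← Real.rpow_natCast (ε ^ _), ← Real.rpow_mul hε.le, ← Real.rpow_add hε]; norm_num
  have t2' : ∫ t in Set.Ioi T, wt χ ε t * u t ^ 2 ≤ C1 * ε ^ (-(1 / 10) : ℝ) := by
    refine t2.trans ?_
    calc F0 χ ε u v T / hh χ ε T / (ε * T) = F0 χ ε u v T * ((1 / hh χ ε T) * (1 / (ε * T))) := by
          ring
      _ ≤ C1 * (ε ^ (2 / 5 : ℝ) * ε ^ (-(1 / 2) : ℝ)) := by
          gcongr
          exact G.F_le T (by linarith) le_rfl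
      _ = _ := by rw [← Real.rpow_add hε]; norm_num
  set γ : ℝ := ε ^ (1 / 5 : ℝ) with hγ
  have hγ0 : 0 < γ := by positivity
  calc |∫ t in Set.Ioi T, t ^ (-ξ) * wt χ ε t * u t|
      ≤ ∫ t in Set.Ioi T, |t ^ (-ξ) * wt χ ε t * u t| := abs_integral_le_integral_abs
    _ ≤ ∫ t in Set.Ioi T, (1 / (2 * γ) * wt χ ε t + γ / 2 * (wt χ ε t * u t ^ 2)) := by
        refine setIntegral_mono_on ((hIntg.mono_set (Set.Ioi_subset_Ioi hT0.le)).abs)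
          ((i1.const_mul _).add (i2.const_mul _)) measurableSet_Ioi ?_
        intro t ht
        have ht : T < t := ht
        have t0 : 0 < t := by linarith
        have y1 : t ^ (-ξ) ≤ 1 := Real.rpow_le_one_of_one_le_of_nonpos (by linarith) (by linarith)
        have y0 : 0 < t ^ (-ξ) := by positivity
        have w0 := @wt_nonneg χ ε t t0.le
        rw [abs_mul, abs_mul, abs_of_pos y0, abs_of_nonneg w0]
        have am : |u t| ≤ 1 / (2 * γ) + γ / 2 * u t ^ 2 := by
          rw [← sq_abs]
          have : 0 ≤ (γ * |u t| - 1) ^ 2 / (2 * γ) := by positivity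
          have e : (γ * |u t| - 1) ^ 2 / (2 * γ) = 1 / (2 * γ) + γ / 2 * |u t| ^ 2 - |u t| := by
            field_simp; ring
          linarith
        calc t ^ (-ξ) * wt χ ε t * |u t| ≤ 1 * wt χ ε t * (1 / (2 * γ) + γ / 2 * u t ^ 2) := by
              gcongr
          _ = _ := by ring
    _ = 1 / (2 * γ) * (∫ t in Set.Ioi T, wt χ ε t) +
          γ / 2 * ∫ t in Set.Ioi T, wt χ ε t * u t ^ 2 := by
        rw [integral_add (i1.const_mul _) (i2.const_mul _), integral_const_mul, integral_const_mul]
    _ ≤ 1 / (2 * γ) * ε ^ (3 / 10 : ℝ) + γ / 2 * (C1 * ε ^ (-(1 / 10) : ℝ)) := by gcongr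
    _ = 1 / 2 * ε ^ (1 / 10 : ℝ) + C1 / 2 * ε ^ (1 / 10 : ℝ) := by
        have e1 : ε ^ (3 / 10 : ℝ) = γ * ε ^ (1 / 10 : ℝ) := by
          rw [hγ, ← Real.rpow_add hε]; norm_num
        have e2 : ε ^ (1 / 10 : ℝ) = γ * ε ^ (-(1 / 10) : ℝ) := by
          rw [hγ, ← Real.rpow_add hε]; norm_num
        rw [e1]
        congr 1
        · field_simp
        · rw [e2]; ring
    _ ≤ C1 * ε ^ (1 / 10 : ℝ) := by
        have : 0 < ε ^ (1 / 10 : ℝ) := by positivity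
        nlinarith

theorem I_bounds {χ κ ε C1 x1 T ξ : ℝ} {u v : ℝ → ℝ} (hκ : 0 < κ) (hε : 0 < ε) (hε1 : ε ≤ 1)
    (hξ0 : 0 ≤ ξ) (hξ : ξ < (χ + 1) / 2) (hχ : 0 ≤ χ) (hC1 : 1 ≤ C1)
    (S : Sol χ κ ε u v) (G : Good χ κ ε C1 u v x1 T) :
    (4 : ℝ) ^ (-ξ) - (24 * κ + 16 * ξ * (ξ + 1) + (κ + ξ * (ξ + 1) + ξ + 2) * C1) *
        ε ^ (1 / 10 : ℝ) ≤ ∫ t in Set.Ioi 0, t ^ (-ξ) * wt χ ε t * u t ∧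
    ∫ t in Set.Ioi 0, t ^ (-ξ) * wt χ ε t * u t ≤ 8 * (4 : ℝ) ^ (χ + 1 - ξ) + 16 * ξ +
      (24 * κ + 16 * ξ * (ξ + 1) + (κ + ξ * (ξ + 1) + ξ + 2) * C1) * ε ^ (1 / 10 : ℝ) := by
  obtain ⟨a1, a2⟩ := I_inner hκ hε hξ0 hξ hχ S G
  obtain ⟨b1, b2⟩ := I_mid1 hκ hε hξ0 hξ hχ S G
  have c := abs_le.1 (I_mid2 hκ hε hε1 hξ0 hξ hχ hC1 S G)
  have d := abs_le.1 (I_tail hκ hε hξ0 hξ hχ hC1 S G)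
  have hIntg := wtu_int (r := -ξ) hε (by linarith) S
  have hx1 := G.x1_ge
  have hx4 := G.x1_le
  have hab := G.a_le
  have hTb := G.T_ge
  set b : ℝ := ε ^ (-(1 / 2) : ℝ) with hb
  have hT0 : 0 < T := by linarith
  have hii : ∀ x y : ℝ, 0 ≤ x → x ≤ y →
      IntervalIntegrable (fun t => t ^ (-ξ) * wt χ ε t * u t) volume x y := by
    intro x y h0 h1
    rw [intervalIntegrable_iff_integrableOn_Ioc_of_le h1]
    exact hIntg.mono_set fun t ht => lt_of_le_of_lt h0 ht.1
  have s : ∫ t in Set.Ioi 0, t ^ (-ξ) * wt χ ε t * u t =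
      (∫ t in (0 : ℝ)..x1, t ^ (-ξ) * wt χ ε t * u t) +
      (∫ t in x1..b, t ^ (-ξ) * wt χ ε t * u t) +
      (∫ t in b..T, t ^ (-ξ) * wt χ ε t * u t) +
      ∫ t in Set.Ioi T, t ^ (-ξ) * wt χ ε t * u t := by
    rw [intervalIntegral.integral_add_adjacent_intervals (hii _ _ le_rfl (by linarith))
      (hii _ _ (by linarith) (by linarith)),
      intervalIntegral.integral_add_adjacent_intervals (hii _ _ le_rfl (by linarith))
      (hii _ _ (by linarith) (by linarith)), intervalIntegral.integral_of_le hT0.le,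
      ← setIntegral_union Set.Ioc_disjoint_Ioi_same measurableSet_Ioi
      (hIntg.mono_set Set.Ioc_subset_Ioi_self) (hIntg.mono_set (Set.Ioi_subset_Ioi hT0.le)),
      Set.Ioc_union_Ioi_eq_Ioi hT0.le]
  rw [s]
  have pw : ε ^ (1 / 2 : ℝ) ≤ ε ^ (1 / 10 : ℝ) :=
    Real.rpow_le_rpow_of_exponent_ge hε hε1 (by norm_num)
  have pk : (24 * κ + 16 * ξ * (ξ + 1)) * ε ^ (1 / 2 : ℝ) ≤
    (24 * κ + 16 * ξ * (ξ + 1)) * ε ^ (1 / 10 : ℝ) := by gcongr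
  obtain ⟨c1, c2⟩ := c
  obtain ⟨d1, d2⟩ := d
  constructor <;> linarith

theorem core {χ κ ξ : ℝ} (hκ : 0 < κ) (hξ0 : 0 ≤ ξ) (hξ : ξ < (χ + 1) / 2) (hχ : 0 ≤ χ) :
    ∃ c C ε₀ : ℝ, 0 < c ∧ c ≤ C ∧ 0 < ε₀ ∧ ∀ ε, 0 < ε → ε < ε₀ → ∀ u v, Sol χ κ ε u v →
      c ≤ ε ^ ((χ + 2) / 4) * (∫ t in Set.Ioi 0, wt χ ε t * u t ^ 2) ∧
      ε ^ ((χ + 2) / 4) * (∫ t in Set.Ioi 0, wt χ ε t * u t ^ 2) ≤ C ∧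
      c ≤ (∫ t in Set.Ioi 0, t ^ (-ξ) * wt χ ε t * u t) ∧
      (∫ t in Set.Ioi 0, t ^ (-ξ) * wt χ ε t * u t) ≤ C := by
  obtain ⟨C1, hC1, ev⟩ := exists_good χ κ hχ hκ
  have hC0 : 0 < C1 := by linarith
  set K : ℝ := 24 * κ + 16 * ξ * (ξ + 1) + (κ + ξ * (ξ + 1) + ξ + 2) * C1 with hK
  have hK0 : 0 < K := by positivity
  have h4 : (0 : ℝ) < 4 ^ (-ξ) := by positivity
  set Gm : ℝ := (1 / 2 : ℝ) ^ (-((χ + 2) / 4)) * (1 / 2) * Real.Gamma ((χ / 2 + 1) / 2) with hGm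
  have hG0 : 0 < Gm := by
    have := Real.Gamma_pos_of_pos (show 0 < (χ / 2 + 1) / 2 by positivity)
    positivity
  set A : ℝ := 576 * (2 * χ + 4) ^ χ * (2 * χ + 4) with hA
  have hA0 : 0 < A := by positivity
  set B : ℝ := 8 * (4 : ℝ) ^ (χ + 1 - ξ) + 16 * ξ with hB
  have hB0 : 0 < B := by positivity
  have e1 := eventually_small (2 / (4 : ℝ) ^ (-ξ) * K) (1 / 10) (by norm_num)
  have e2 := eventually_small (2 * C1 * C1 * Real.exp 2) ((χ + 2) / 4) (by positivity)
  have e3 := eventually_small 1 1 one_pos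
  obtain ⟨ε₀, hε₀, hsub⟩ := (mem_nhdsGT_iff_exists_Ioo_subset (a := (0 : ℝ))).1
    (Filter.inter_mem (Filter.inter_mem ev e1) (Filter.inter_mem e2 e3))
  set c1 : ℝ := Real.exp (-2) / (4 * C1) with hc1
  set c2 : ℝ := (4 : ℝ) ^ (-ξ) / 2 with hc2
  set D1 : ℝ := A + C1 * Gm + C1 with hD1
  set D2 : ℝ := B + c2 with hD2
  have hc10 : 0 < c1 := by positivity
  have hc20 : 0 < c2 := by positivity
  refine ⟨min c1 c2, max D1 D2, ε₀, lt_min hc10 hc20, ?_, hε₀, ?_⟩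
  · exact (min_le_right _ _).trans ((by rw [hD2]; linarith : c2 ≤ D2).trans (le_max_right _ _))
  intro ε hε hε2 u v S
  obtain ⟨⟨g, f1⟩, f2, f3⟩ := hsub ⟨hε, hε2⟩
  obtain ⟨x1, T, G⟩ := g u v S
  simp only [Set.mem_ofPred_eq, Real.rpow_one, one_mul] at f1 f2 f3
  have hN1 := N_lower hχ hκ hε hC1 S G
  have hN2 := N_upper hχ hκ hε f3 hC1 S G
  obtain ⟨hI1, hI2⟩ := I_bounds hκ hε f3 hξ0 hξ hχ hC1 S G
  rw [← hK] at hI1 hI2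
  rw [← hA] at hN2
  rw [← hB] at hI2
  have f1' : K * ε ^ (1 / 10 : ℝ) ≤ c2 := by
    have : 2 / (4 : ℝ) ^ (-ξ) * K * ε ^ (1 / 10 : ℝ) = K * ε ^ (1 / 10 : ℝ) / c2 := by
      rw [hc2]; field_simp
    rw [this, div_le_iff₀ hc20] at f1
    linarith
  set E : ℝ := ε ^ ((χ + 2) / 4) with hE
  have hE0 : 0 < E := by positivity
  have hEE : E * ε ^ (-((χ + 2) / 4)) = 1 := by
    rw [hE, ← Real.rpow_add hε, add_neg_cancel, Real.rpow_zero]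
  refine ⟨(min_le_left _ _).trans ?_, le_trans ?_ (le_max_left _ _), (min_le_right _ _).trans ?_,
    le_trans ?_ (le_max_right _ _)⟩
  · have h1 := mul_le_mul_of_nonneg_left hN1 hE0.le
    have h2 : E * (ε ^ (-((χ + 2) / 4)) * Real.exp (-2) / C1 - C1) =
        4 * c1 - E * C1 := by
      rw [mul_sub, ← mul_div_assoc, ← mul_assoc, hEE, hc1]; field_simp
    have h3 : E * C1 ≤ 2 * c1 := by
      have : 2 * C1 * C1 * Real.exp 2 * E = E * C1 / (2 * c1) := by
        rw [hc1, Real.exp_neg]; field_simp; ring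
      rw [this, div_le_iff₀ (by positivity)] at f2
      linarith
    linarith
  · have h1 := mul_le_mul_of_nonneg_left hN2 hE0.le
    have hE1 : E ≤ 1 := Real.rpow_le_one hε.le f3 (by positivity)
    have h2 : E * (C1 * ((ε / 2) ^ (-(χ / 2 + 1) / 2) * (1 / 2) * Real.Gamma ((χ / 2 + 1) / 2))) =
        C1 * Gm := by
      have : -(χ / 2 + 1) / 2 = -((χ + 2) / 4) := by ring
      rw [this, div_eq_mul_one_div ε, Real.mul_rpow hε.le (by norm_num), hGm]
      calc _ = C1 * ((E * ε ^ (-((χ + 2) / 4))) * ((1 / 2 : ℝ) ^ (-((χ + 2) / 4)) * (1 / 2) *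
            Real.Gamma ((χ / 2 + 1) / 2))) := by ring
        _ = _ := by rw [hEE, one_mul]
    have h3 : E * ε ^ (-(1 / 10) : ℝ) ≤ 1 := by
      rw [hE, ← Real.rpow_add hε]
      exact Real.rpow_le_one hε.le f3 (by linarith)
    have h4' : E * A ≤ 1 * A := by gcongr
    have h5 : C1 * (E * ε ^ (-(1 / 10) : ℝ)) ≤ C1 * 1 := by gcongr
    rw [hD1]
    calc _ ≤ _ := h1
      _ = E * A + E * (C1 * ((ε / 2) ^ (-(χ / 2 + 1) / 2) * (1 / 2) *
            Real.Gamma ((χ / 2 + 1) / 2))) + C1 * (E * ε ^ (-(1 / 10) : ℝ)) := by ring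
      _ ≤ _ := by rw [h2]; linarith
  · rw [hc2] at f1' ⊢; linarith
  · rw [hD2]; linarith

theorem eig_regular {σ lam : ℝ} (hσ : 0 < σ) (hl : 0 < lam) {f φ : ℝ → ℝ} (hf : Continuous f)
    (hfi : Integrable f) (h : ∀ x, lam * φ x = ∫ y, Real.exp (-|x - y| / σ) * f y) :
    ∃ ψ : ℝ → ℝ, (∀ x, HasDerivAt φ (ψ x) x) ∧
      ∀ x, HasDerivAt ψ (1 / σ ^ 2 * φ x - 2 / (σ * lam) * f x) x := by
  have cp : Continuous fun y => Real.exp (y / σ) * f y := by fun_prop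
  have cm : Continuous fun y => Real.exp (-y / σ) * f y := by fun_prop
  have iA : ∀ x, IntegrableOn (fun y => Real.exp (y / σ) * f y) (Set.Iic x) := by
    intro x
    refine hfi.integrableOn.bdd_mul (c := Real.exp (x / σ)) (by fun_prop) ?_
    filter_upwards [ae_restrict_mem measurableSet_Iic] with y hy
    have hy : y ≤ x := hy
    rw [Real.norm_eq_abs, abs_of_pos (Real.exp_pos _)]
    apply Real.exp_le_exp.2; gcongr
  have iB : ∀ x, IntegrableOn (fun y => Real.exp (-y / σ) * f y) (Set.Ioi x) := by
    intro x
    refine hfi.integrableOn.bdd_mul (c := Real.exp (-x / σ)) (by fun_prop) ?_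
    filter_upwards [ae_restrict_mem measurableSet_Ioi] with y hy
    have hy : x < y := hy
    rw [Real.norm_eq_abs, abs_of_pos (Real.exp_pos _)]
    apply Real.exp_le_exp.2; gcongr
  set A : ℝ → ℝ := fun x => ∫ y in Set.Iic x, Real.exp (y / σ) * f y with hA
  set B : ℝ → ℝ := fun x => ∫ y in Set.Ioi x, Real.exp (-y / σ) * f y with hB
  have dA : ∀ x, HasDerivAt A (Real.exp (x / σ) * f x) x := by
    intro x
    have e : A = fun x => A 0 + ∫ y in (0 : ℝ)..x, Real.exp (y / σ) * f y := by
      funext x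
      rw [← intervalIntegral.integral_Iic_sub_Iic (iA 0) (iA x)]; ring
    rw [e]
    exact (cp.integral_hasStrictDerivAt 0 x).hasDerivAt.const_add _
  have dB : ∀ x, HasDerivAt B (-(Real.exp (-x / σ) * f x)) x := by
    intro x
    have e : B = fun x => B 0 - ∫ y in (0 : ℝ)..x, Real.exp (-y / σ) * f y := by
      funext x
      rw [← intervalIntegral.integral_Ioi_sub_Ioi' (iB 0) (iB x)]; ring
    rw [e]
    exact (cm.integral_hasStrictDerivAt 0 x).hasDerivAt.const_sub _
  have eφ : φ = fun x => 1 / lam * (Real.exp (-x / σ) * A x + Real.exp (x / σ) * B x) := by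
    funext x
    have h1 : ∀ y, y ≤ x → Real.exp (-|x - y| / σ) * f y =
        Real.exp (-x / σ) * (Real.exp (y / σ) * f y) := by
      intro y hy
      rw [abs_of_nonneg (by linarith), ← mul_assoc, ← Real.exp_add]
      congr 2; ring
    have h2 : ∀ y, x < y → Real.exp (-|x - y| / σ) * f y =
        Real.exp (x / σ) * (Real.exp (-y / σ) * f y) := by
      intro y hy
      rw [abs_of_neg (by linarith), ← mul_assoc, ← Real.exp_add]
      congr 2; ring
    have hIntg : Integrable fun y => Real.exp (-|x - y| / σ) * f y := by
      refine hfi.bdd_mul (c := 1) (by fun_prop) (Filter.Eventually.of_forall fun y => ?_)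
      rw [Real.norm_eq_abs, abs_of_pos (Real.exp_pos _), Real.exp_le_one_iff]
      have := abs_nonneg (x - y)
      rw [neg_div]
      have : 0 ≤ |x - y| / σ := by positivity
      linarith
    have e := h x
    rw [← intervalIntegral.integral_Iic_add_Ioi (b := x) hIntg.integrableOn hIntg.integrableOn,
      setIntegral_congr_fun measurableSet_Iic (fun y hy => h1 y hy),
      setIntegral_congr_fun measurableSet_Ioi (fun y hy => h2 y hy), integral_const_mul,
      integral_const_mul] at e
    simp only [hA, hB]
    rw [← e]; field_simp
  have dp : ∀ x, HasDerivAt (fun x : ℝ => Real.exp (x / σ)) (Real.exp (x / σ) * (1 / σ)) x :=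
    fun x => ((hasDerivAt_id x).div_const σ).exp
  have dm : ∀ x, HasDerivAt (fun x : ℝ => Real.exp (-x / σ)) (Real.exp (-x / σ) * (-1 / σ)) x :=
    fun x => ((hasDerivAt_id x).neg.div_const σ).exp
  have ee : ∀ x, Real.exp (-x / σ) * Real.exp (x / σ) = 1 := by
    intro x
    rw [← Real.exp_add]; ring_nf; simp
  refine ⟨fun x => 1 / lam * (1 / σ) * (-(Real.exp (-x / σ) * A x) + Real.exp (x / σ) * B x),
    fun x => ?_, fun x => ?_⟩
  · rw [eφ]
    refine ((((dm x).mul (dA x)).add ((dp x).mul (dB x))).const_mul (1 / lam)).congr_deriv ?_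
    have := ee x
    ring
  · have e := congrFun eφ x
    rw [e]
    refine (((((dm x).mul (dA x)).neg).add ((dp x).mul (dB x))).const_mul
      (1 / lam * (1 / σ))).congr_deriv ?_
    have := ee x
    have e2 : Real.exp (-x / σ) * (Real.exp (x / σ) * f x) = f x := by rw [← mul_assoc, this, one_mul]
    have e3 : Real.exp (x / σ) * -(Real.exp (-x / σ) * f x) = - f x := by
      rw [mul_neg, ← mul_assoc, mul_comm (Real.exp (x / σ)), this, one_mul]
    rw [e2, e3]
    field_simp; ring

theorem eig_bdd {σ lam : ℝ} (hσ : 0 < σ) (hl : 0 < lam) {f φ : ℝ → ℝ} (hf : Continuous f)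
    (hfi : Integrable f) (h : ∀ x, lam * φ x = ∫ y, Real.exp (-|x - y| / σ) * f y) :
    (∃ B, ∀ x, |φ x| ≤ B) ∧ Filter.Tendsto φ Filter.atTop (nhds 0) := by
  have hb : ∀ x y, |Real.exp (-|x - y| / σ) * f y| ≤ |f y| := by
    intro x y
    rw [abs_mul, abs_of_pos (Real.exp_pos _)]
    have : Real.exp (-|x - y| / σ) ≤ 1 := by
      rw [Real.exp_le_one_iff, neg_div]
      have : 0 ≤ |x - y| / σ := by positivity
      linarith
    exact mul_le_of_le_one_left (abs_nonneg _) this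
  have e : ∀ x, φ x = 1 / lam * ∫ y, Real.exp (-|x - y| / σ) * f y := by
    intro x; rw [← h x]; field_simp
  constructor
  · refine ⟨1 / lam * ∫ y, |f y|, fun x => ?_⟩
    rw [e x, abs_mul, abs_of_pos (by positivity : 0 < 1 / lam)]
    gcongr
    refine abs_integral_le_integral_abs.trans ?_
    refine integral_mono_of_nonneg (Filter.Eventually.of_forall fun y => abs_nonneg _) hfi.abs
      (Filter.Eventually.of_forall fun y => hb x y)
  · have : Filter.Tendsto (fun x => ∫ y, Real.exp (-|x - y| / σ) * f y) Filter.atTop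
        (nhds (∫ y : ℝ, (0 : ℝ))) := by
      refine tendsto_integral_filter_of_dominated_convergence (fun y => |f y|) ?_ ?_ hfi.abs ?_
      · exact Filter.Eventually.of_forall fun x => by
          apply Continuous.aestronglyMeasurable; fun_prop
      · exact Filter.Eventually.of_forall fun x => Filter.Eventually.of_forall fun y => hb x y
      · refine Filter.Eventually.of_forall fun y => ?_
        have h1 : Filter.Tendsto (fun x : ℝ => |x - y| / σ) Filter.atTop Filter.atTop := by
          apply Filter.Tendsto.atTop_div_const hσ
          exact Filter.tendsto_abs_atTop_atTop.comp
            (Filter.tendsto_atTop_add_const_right _ (-y) Filter.tendsto_id)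
        have h2 := (Real.tendsto_exp_neg_atTop_nhds_zero.comp h1).mul_const (f y)
        simpa [neg_div, Function.comp_def] using h2
    have h3 := this.const_mul (1 / lam)
    simp only [integral_zero, mul_zero] at h3
    exact h3.congr fun x => (e x).symm

theorem ode_zero {φ ψ q : ℝ → ℝ} (hq : Continuous q) (h1 : ∀ x, HasDerivAt φ (ψ x) x)
    (h2 : ∀ x, HasDerivAt ψ (q x * φ x) x) (h0 : φ 0 = 0) (h0' : ψ 0 = 0) (b : ℝ) (hb : 0 ≤ b) :
    φ b = 0 := by
  obtain ⟨K, hK⟩ := (isCompact_Icc (a := (0 : ℝ)) (b := b)).exists_bound_of_continuousOn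
    hq.continuousOn
  have := le_of_hasDeriv_nonneg
    (f := fun x => -((φ x ^ 2 + ψ x ^ 2) * Real.exp (-((1 + K) * x))))
    (f' := fun x => ((1 + K) * (φ x ^ 2 + ψ x ^ 2) - 2 * (φ x * ψ x) * (1 + q x)) *
      Real.exp (-((1 + K) * x))) hb (fun x hx => by
      have d : HasDerivAt (fun x : ℝ => Real.exp (-((1 + K) * x)))
        (Real.exp (-((1 + K) * x)) * (-((1 + K) * 1))) x :=
        (((hasDerivAt_id x).const_mul (1 + K)).neg).exp
      refine (((((h1 x).pow 2).add ((h2 x).pow 2)).mul d).neg).congr_deriv ?_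
      simp only [Pi.add_apply, Pi.pow_apply]
      push_cast; ring) (fun x hx => by
      apply mul_nonneg _ (Real.exp_pos _).le
      have k := abs_le.1 (by simpa using hK x hx)
      have k0 : |q x| ≤ K := by simpa using hK x hx
      have a1 : |1 + q x| ≤ 1 + K := (abs_add_le _ _).trans (by rw [abs_one]; linarith)
      have a2 : 2 * |φ x * ψ x| ≤ φ x ^ 2 + ψ x ^ 2 := by
        rw [abs_mul, ← sq_abs (φ x), ← sq_abs (ψ x)]
        nlinarith [sq_nonneg (|φ x| - |ψ x|)]
      have a3 : 2 * (φ x * ψ x) * (1 + q x) ≤ 2 * |φ x * ψ x| * |1 + q x| := by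
        refine (le_abs_self _).trans (le_of_eq ?_)
        rw [abs_mul, abs_mul]; norm_num
      have a4 : 2 * |φ x * ψ x| * |1 + q x| ≤ (φ x ^ 2 + ψ x ^ 2) * (1 + K) :=
        mul_le_mul a2 a1 (abs_nonneg _) (by positivity)
      linarith)
  simp only [h0, h0'] at this
  have e := Real.exp_pos (-((1 + K) * b))
  have : (φ b ^ 2 + ψ b ^ 2) * Real.exp (-((1 + K) * b)) ≤ 0 := by
    norm_num at this; linarith
  have h3 : φ b ^ 2 + ψ b ^ 2 ≤ 0 := by
    by_contra hc
    push Not at hc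
    have := mul_pos hc e
    linarith
  have h4 : φ b ^ 2 ≤ 0 := by linarith [sq_nonneg (ψ b)]
  exact pow_eq_zero_iff two_ne_zero |>.1 (le_antisymm h4 (sq_nonneg _))

theorem dens_cont {χ : ℝ} (hχ : 0 ≤ χ) : Continuous (dataDensity χ) := by
  unfold dataDensity
  have : Continuous fun t : ℝ => |t| ^ χ := (Real.continuous_rpow_const hχ).comp continuous_abs
  fun_prop

theorem dens_scale {χ ℓ t : ℝ} (hℓ : 0 < ℓ) (ht : 0 ≤ t) :
    dataDensity χ (ℓ * t) = ℓ ^ χ * wt χ (ℓ ^ 2) t / Real.Gamma ((1 + χ) / 2) := by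
  unfold dataDensity wt
  rw [abs_of_nonneg (by positivity), Real.mul_rpow hℓ.le ht, mul_pow]
  ring

/-- Reduction to the scaled problem. -/
theorem reduce {χ σ lam : ℝ} (hχ : 0 ≤ χ) (hσ : 0 < σ) (hl : 0 < lam) {φ : ℝ → ℝ}
    (hφ : Continuous φ) (hi : Integrable (fun y => dataDensity χ y * |φ y|))
    (heq : ∀ x : ℝ, lam * φ x = ∫ y : ℝ, dataDensity χ y * Real.exp (-|x - y| / σ) * φ y)
    (hodd : ∀ x : ℝ, φ (-x) = -φ x) (hn : (∫ x : ℝ, dataDensity χ x * φ x ^ 2) = 1)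
    {ℓ : ℝ} (hℓ : 0 < ℓ) (hℓl : ℓ ^ (χ + 2) = σ * lam * Real.Gamma ((1 + χ) / 2) / 2) :
    ∃ s : ℝ, s ≠ 0 ∧ ∃ u v : ℝ → ℝ, Sol χ (1 / σ ^ 2) (ℓ ^ 2) u v ∧
      ∀ t, φ (ℓ * t) = s * ℓ * u t := by
  have hp := dens_cont hχ
  have hΓ : 0 < Real.Gamma ((1 + χ) / 2) := Real.Gamma_pos_of_pos (by positivity)
  have hp0 : ∀ x, 0 ≤ dataDensity χ x := fun x => by unfold dataDensity; positivity
  set f : ℝ → ℝ := fun y => dataDensity χ y * φ y with hf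
  have hfc : Continuous f := hp.mul hφ
  have hfi : Integrable f := by
    refine hi.mono' hfc.aestronglyMeasurable (Filter.Eventually.of_forall fun y => ?_)
    rw [Real.norm_eq_abs, hf, abs_mul, abs_of_nonneg (hp0 y)]
  have heq' : ∀ x, lam * φ x = ∫ y, Real.exp (-|x - y| / σ) * f y := by
    intro x
    rw [heq x]
    congr 1; funext y; simp only [hf]; ring
  obtain ⟨ψ, h1, h2⟩ := eig_regular hσ hl hfc hfi heq'
  obtain ⟨⟨B, hB⟩, hlim⟩ := eig_bdd hσ hl hfc hfi heq'
  have h0 : φ 0 = 0 := by have := hodd 0; rw [neg_zero] at this; linarith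
  have hs : ψ 0 ≠ 0 := by
    intro hs
    have hz : ∀ b, 0 ≤ b → φ b = 0 := fun b hb =>
      ode_zero (q := fun x => 1 / σ ^ 2 - 2 / (σ * lam) * dataDensity χ x) (by fun_prop) h1
        (fun x => (h2 x).congr_deriv (by simp only [hf]; ring)) h0 hs b hb
    have hz2 : ∀ x, φ x = 0 := by
      intro x
      rcases le_total 0 x with h | h
      · exact hz x h
      · have := hodd (-x)
        rw [neg_neg, hz (-x) (by linarith)] at this
        simpa using this
    simp [hz2] at hn
  refine ⟨ψ 0, hs, fun t => φ (ℓ * t) / (ψ 0 * ℓ), fun t => ψ (ℓ * t) / ψ 0, ?_, ?_⟩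
  · have dl : ∀ t : ℝ, HasDerivAt (fun t : ℝ => ℓ * t) (ℓ * 1) t := fun t =>
      (hasDerivAt_id t).const_mul ℓ
    refine ⟨fun t ht => ?_, fun t ht => ?_, by simp [h0], by simp [hs], ?_, ?_⟩
    · refine (((h1 (ℓ * t)).comp t (dl t)).div_const (ψ 0 * ℓ)).congr_deriv ?_
      field_simp
    · refine (((h2 (ℓ * t)).comp t (dl t)).div_const (ψ 0)).congr_deriv ?_
      simp only [hf]
      rw [dens_scale hℓ ht]
      have hG : ℓ ^ χ * ℓ ^ 2 = σ * lam * Real.Gamma ((1 + χ) / 2) / 2 := by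
        rw [← hℓl, Real.rpow_add hℓ, Real.rpow_two]
      have hG2 : 2 / (σ * lam) * (ℓ ^ χ * wt χ (ℓ ^ 2) t / Real.Gamma ((1 + χ) / 2)) * ℓ ^ 2 =
          wt χ (ℓ ^ 2) t := by
        calc _ = 2 / (σ * lam) * ((ℓ ^ χ * ℓ ^ 2) * wt χ (ℓ ^ 2) t / Real.Gamma ((1 + χ) / 2)) := by
              ring
          _ = _ := by rw [hG]; field_simp
      calc _ = (1 / σ ^ 2 * ℓ ^ 2 - 2 / (σ * lam) *
            (ℓ ^ χ * wt χ (ℓ ^ 2) t / Real.Gamma ((1 + χ) / 2)) * ℓ ^ 2) *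
            (φ (ℓ * t) / (ψ 0 * ℓ)) := by field_simp
        _ = _ := by rw [hG2]; ring
    · refine ⟨B / |ψ 0 * ℓ|, fun t => ?_⟩
      rw [abs_div]
      gcongr
      exact hB _
    · have := (hlim.comp (Filter.tendsto_id.const_mul_atTop hℓ)).div_const (ψ 0 * ℓ)
      simpa [Function.comp_def] using this
  · intro t
    field_simp

theorem dens_abs {χ x : ℝ} : dataDensity χ |x| = dataDensity χ x := by
  unfold dataDensity; rw [abs_abs, sq_abs]

theorem int_norm {χ ℓ s : ℝ} {φ u : ℝ → ℝ} (hodd : ∀ x : ℝ, φ (-x) = -φ x) (hℓ : 0 < ℓ)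
    (hu : ∀ t, φ (ℓ * t) = s * ℓ * u t) :
    (∫ x : ℝ, dataDensity χ x * φ x ^ 2) = 2 * (ℓ * (ℓ ^ χ * (s * ℓ) ^ 2 /
      Real.Gamma ((1 + χ) / 2) * ∫ t in Set.Ioi 0, wt χ (ℓ ^ 2) t * u t ^ 2)) := by
  have e1 : ∀ x, dataDensity χ x * φ x ^ 2 = (fun y => dataDensity χ y * φ y ^ 2) |x| := by
    intro x
    simp only [dens_abs]
    rcases abs_choice x with h | h <;> rw [h]
    rw [hodd]; ring
  rw [integral_congr_ae (Filter.Eventually.of_forall e1),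
    integral_comp_abs (f := fun y => dataDensity χ y * φ y ^ 2)]
  congr 1
  have := integral_comp_mul_left_Ioi' (fun y => dataDensity χ y * φ y ^ 2) 0 hℓ
  rw [mul_zero] at this
  rw [← this, smul_eq_mul]
  refine congrArg (fun z => ℓ * z) ?_
  rw [← integral_const_mul]
  refine setIntegral_congr_fun (measurableSet_Ioi (a := (0 : ℝ))) fun t ht => ?_
  have ht : 0 < t := ht
  rw [dens_scale hℓ (le_of_lt ht), hu]
  ring

theorem int_coef {χ ξ ℓ s : ℝ} {φ u : ℝ → ℝ} (hodd : ∀ x : ℝ, φ (-x) = -φ x) (hℓ : 0 < ℓ)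
    (hu : ∀ t, φ (ℓ * t) = s * ℓ * u t) :
    (∫ x : ℝ, dataDensity χ x * targetFun ξ x * φ x) = 2 * (ℓ * (ℓ ^ χ * ℓ ^ (-ξ) * (s * ℓ) /
      Real.Gamma ((1 + χ) / 2) * ∫ t in Set.Ioi 0, t ^ (-ξ) * wt χ (ℓ ^ 2) t * u t)) := by
  have h0 : φ 0 = 0 := by have := hodd 0; rw [neg_zero] at this; linarith
  have e1 : ∀ x, dataDensity χ x * targetFun ξ x * φ x =
      (fun y => dataDensity χ y * y ^ (-ξ) * φ y) |x| := by
    intro x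
    simp only [dens_abs, targetFun]
    rcases lt_trichotomy x 0 with h | h | h
    · rw [Real.sign_of_neg h, abs_of_neg h, hodd]; ring
    · simp [h, h0]
    · rw [Real.sign_of_pos h, abs_of_pos h]; ring
  rw [integral_congr_ae (Filter.Eventually.of_forall e1),
    integral_comp_abs (f := fun y => dataDensity χ y * y ^ (-ξ) * φ y)]
  congr 1
  have := integral_comp_mul_left_Ioi' (fun y => dataDensity χ y * y ^ (-ξ) * φ y) 0 hℓ
  rw [mul_zero] at this
  rw [← this, smul_eq_mul]
  refine congrArg (fun z => ℓ * z) ?_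
  rw [← integral_const_mul]
  refine setIntegral_congr_fun (measurableSet_Ioi (a := (0 : ℝ))) fun t ht => ?_
  have ht : 0 < t := ht
  rw [dens_scale hℓ (le_of_lt ht), hu, Real.mul_rpow hℓ.le (le_of_lt ht)]
  ring

/-- Elimination of the slope `s`. -/
theorem coef_sq {χ ξ ℓ s Γ N I n : ℝ} (hℓ : 0 < ℓ) (hΓ : 0 < Γ) (hn0 : 0 < n)
    (hn : n = (ℓ ^ 2) ^ ((χ + 2) / 4) * N)
    (h1 : 2 * (ℓ * (ℓ ^ χ * (s * ℓ) ^ 2 / Γ * N)) = 1) :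
    (2 * (ℓ * (ℓ ^ χ * ℓ ^ (-ξ) * (s * ℓ) / Γ * I))) ^ 2 =
      2 / Γ * (ℓ ^ (3 * χ / 4 + 1 - ξ)) ^ 2 * I ^ 2 / n := by
  set x : ℝ := ℓ ^ (χ / 4) with hx
  set y : ℝ := ℓ ^ (-ξ) with hy
  have hx0 : 0 < x := by positivity
  have e1 : ℓ ^ χ = x ^ 4 := by
    rw [hx, ← Real.rpow_natCast, ← Real.rpow_mul hℓ.le]; congr 1; push_cast; ring
  have e2 : (ℓ ^ 2) ^ ((χ + 2) / 4) = x ^ 2 * ℓ := by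
    rw [← Real.rpow_natCast ℓ, ← Real.rpow_mul hℓ.le, hx, ← Real.rpow_natCast,
      ← Real.rpow_mul hℓ.le]
    nth_rewrite 3 [← Real.rpow_one ℓ]
    rw [← Real.rpow_add hℓ]; congr 1; push_cast; ring
  have e3 : ℓ ^ (3 * χ / 4 + 1 - ξ) = x ^ 3 * ℓ * y := by
    have : 3 * χ / 4 + 1 - ξ = χ / 4 * (3 : ℕ) + 1 + -ξ := by push_cast; ring
    rw [this, Real.rpow_add hℓ, Real.rpow_add hℓ, Real.rpow_mul hℓ.le, Real.rpow_natCast,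
      Real.rpow_one]
  rw [e2] at hn
  rw [e1] at h1
  rw [e1, e3]
  have hN : 0 < N := by
    by_contra h
    push Not at h
    have : x ^ 2 * ℓ * N ≤ 0 := mul_nonpos_of_nonneg_of_nonpos (by positivity) h
    linarith
  rw [hn]
  have h3 : 2 * ℓ ^ 3 * x ^ 4 * s ^ 2 * N = Γ := by
    field_simp at h1
    linarith
  field_simp
  rw [← h3]; ring

/-- For small eigenvalues `λ`, the coefficient of a normalized odd
eigenfunction of the Laplace kernel against the target scales as
`λ^{(3χ/4 + 1 - ξ)/(χ+2)}`. -/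
theorem coefficient_scaling_odd_eigenfunction
    (χ ξ σ : ℝ) (hχ : 0 ≤ χ) (hξ0 : 0 ≤ ξ) (hξ : ξ < (χ + 1) / 2) (hσ : 0 < σ) :
    ∃ c C lam₀ : ℝ, 0 < c ∧ c ≤ C ∧ 0 < lam₀ ∧
      ∀ (lam : ℝ) (φ : ℝ → ℝ), 0 < lam → lam < lam₀ →
        Continuous φ →
        Integrable (fun y => dataDensity χ y * |φ y|) →
        (∀ x : ℝ, lam * φ x = ∫ y : ℝ, dataDensity χ y * Real.exp (-|x - y| / σ) * φ y) →
        (∀ x : ℝ, φ (-x) = -φ x) →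
        (∫ x : ℝ, dataDensity χ x * φ x ^ 2) = 1 →
        c * lam ^ ((3 * χ / 4 + 1 - ξ) / (χ + 2))
            ≤ |∫ x : ℝ, dataDensity χ x * targetFun ξ x * φ x| ∧
        |∫ x : ℝ, dataDensity χ x * targetFun ξ x * φ x|
            ≤ C * lam ^ ((3 * χ / 4 + 1 - ξ) / (χ + 2)) := by
  obtain ⟨c0, C0, ε₀, hc0, hcC, hε₀, hcore⟩ :=
    core (χ := χ) (κ := 1 / σ ^ 2) (ξ := ξ) (by positivity) hξ0 hξ hχ
  have hC0 : 0 < C0 := lt_of_lt_of_le hc0 hcC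
  set Γ : ℝ := Real.Gamma ((1 + χ) / 2) with hΓd
  have hΓ : 0 < Γ := Real.Gamma_pos_of_pos (by positivity)
  set e : ℝ := 3 * χ / 4 + 1 - ξ with he
  set D : ℝ := (σ * Γ / 2) ^ (e / (χ + 2)) with hD
  have hD0 : 0 < D := by positivity
  refine ⟨D * Real.sqrt (2 / Γ * c0 ^ 2 / C0), D * Real.sqrt (2 / Γ * C0 ^ 2 / c0),
    2 * ε₀ ^ ((χ + 2) / 2) / (σ * Γ), by positivity, ?_, by positivity, ?_⟩
  · gcongr
  intro lam φ hl hl0 hφ hi heq hodd hn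
  have hχ2 : χ + 2 ≠ 0 := by positivity
  set m : ℝ := σ * lam * Γ / 2 with hm
  have hm0 : 0 < m := by positivity
  set ℓ : ℝ := m ^ (1 / (χ + 2)) with hℓd
  have hℓ : 0 < ℓ := by positivity
  have hℓl : ℓ ^ (χ + 2) = m := by
    rw [hℓd, ← Real.rpow_mul hm0.le, one_div_mul_cancel hχ2, Real.rpow_one]
  have hεlt : ℓ ^ 2 < ε₀ := by
    have h1 : m < ε₀ ^ ((χ + 2) / 2) := by
      rw [lt_div_iff₀ (by positivity)] at hl0
      rw [hm]; linarith
    have h2 : ℓ < ε₀ ^ (1 / 2 : ℝ) := by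
      have := Real.rpow_lt_rpow hm0.le h1 (show 0 < 1 / (χ + 2) by positivity)
      rw [← Real.rpow_mul hε₀.le] at this
      have e2 : (χ + 2) / 2 * (1 / (χ + 2)) = 1 / 2 := by field_simp
      rwa [e2] at this
    have h3 : (ε₀ ^ (1 / 2 : ℝ)) ^ 2 = ε₀ := by
      rw [← Real.rpow_natCast, ← Real.rpow_mul hε₀.le]; norm_num
    rw [← h3]
    gcongr
  obtain ⟨s, hs, u, v, S, hu⟩ := reduce hχ hσ hl hφ hi heq hodd hn hℓ hℓl
  obtain ⟨n1, n2, i1, i2⟩ := hcore (ℓ ^ 2) (by positivity) hεlt u v S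
  rw [int_norm hodd hℓ hu] at hn
  rw [int_coef hodd hℓ hu]
  set N := ∫ t in Set.Ioi 0, wt χ (ℓ ^ 2) t * u t ^ 2 with hN
  set I := ∫ t in Set.Ioi 0, t ^ (-ξ) * wt χ (ℓ ^ 2) t * u t with hI
  set n : ℝ := (ℓ ^ 2) ^ ((χ + 2) / 4) * N with hnd
  have hn0 : 0 < n := lt_of_lt_of_le hc0 n1
  have key := coef_sq (ξ := ξ) (I := I) hℓ hΓ hn0 hnd hn
  rw [← he] at key
  have hL : ℓ ^ e = D * lam ^ (e / (χ + 2)) := by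
    rw [hℓd, ← Real.rpow_mul hm0.le, hD, ← Real.mul_rpow (by positivity) hl.le]
    congr 1
    · rw [hm]; ring
    · ring
  set L : ℝ := lam ^ (e / (χ + 2)) with hLd
  have hL0 : 0 < L := by positivity
  rw [hL] at key
  set c := 2 * (ℓ * (ℓ ^ χ * ℓ ^ (-ξ) * (s * ℓ) / Γ * I)) with hc
  clear_value c
  have hR : ∀ q : ℝ, 0 ≤ q → (D * Real.sqrt q * L) ^ 2 = D ^ 2 * q * L ^ 2 := by
    intro q hq
    rw [mul_pow, mul_pow, Real.sq_sqrt hq]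
  constructor
  · have h1 : (D * Real.sqrt (2 / Γ * c0 ^ 2 / C0) * L) ^ 2 ≤ c ^ 2 := by
      rw [hR _ (by positivity), key]
      have : 2 / Γ * c0 ^ 2 / C0 ≤ 2 / Γ * I ^ 2 / n := by gcongr
      calc D ^ 2 * (2 / Γ * c0 ^ 2 / C0) * L ^ 2
          ≤ D ^ 2 * (2 / Γ * I ^ 2 / n) * L ^ 2 := by gcongr
        _ = _ := by ring
    have h2 := sq_le_sq.1 h1
    rwa [abs_of_nonneg (by positivity)] at h2
  · have h1 : c ^ 2 ≤ (D * Real.sqrt (2 / Γ * C0 ^ 2 / c0) * L) ^ 2 := by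
      rw [hR _ (by positivity), key]
      have : 2 / Γ * I ^ 2 / n ≤ 2 / Γ * C0 ^ 2 / c0 := by
        have : 0 ≤ I := by linarith
        gcongr
      calc _ = D ^ 2 * (2 / Γ * I ^ 2 / n) * L ^ 2 := by ring
        _ ≤ D ^ 2 * (2 / Γ * C0 ^ 2 / c0) * L ^ 2 := by gcongr
    have h2 := sq_le_sq.1 h1
    rwa [abs_of_nonneg (a := _ * L) (by positivity)] at h2
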